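/- There exist constants c > 0 and C < ∞, depending only on d, with the following property: if ε > 0 and E ⊆ ℝ^d is a Lebesgue measurable set of positive finite measure satisfying ‖T(χ_E)‖_{L^{d+1,∞}} ≥ ε |E|^{d/(d+1)}, then there exists a ball ℬ = ℬ(z̄, e, r, r*) with |π*(ℬ)| ≤ |E| and |π*(ℬ) ∩ E| ≥ c ε^C |E|. -/

import Mathlib

open MeasureTheory ENNReal
open scoped RealInnerProductSpace

noncomputable section

/-- `ℝ^{d-1}` -/
abbrev Vec (n : ℕ) : Type := EuclideanSpace ℝ (Fin n)

/-- `ℝ^d = ℝ^{d-1} × ℝ`, a point `x = (x', x_d)` -/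
abbrev Pt (n : ℕ) : Type := Vec n × ℝ

/-- The Radon-like transform `Tf(x) = ∫_{ℝ^{d-1}} f(x' - t, x_d - |t|²) dt`. -/
def radonT (n : ℕ) (f : Pt n → ℝ≥0∞) (x : Pt n) : ℝ≥0∞ :=
  ∫⁻ t : Vec n, f (x.1 - t, x.2 - ‖t‖ ^ 2)

/-- The incidence functional `𝒯(E, E*) = ∫_E T(χ_{E*})`. -/
def incT (n : ℕ) (E Estar : Set (Pt n)) : ℝ≥0∞ :=
  ∫⁻ x in E, radonT n (Estar.indicator 1) x

/-- Admissibility of the parameters of a ball `ℬ(z̄, e, r, r*)`: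
the center `z̄ = (x̄, x̄*)` lies on the incidence manifold `ℐ`, `ρ > 0`,
`e` is an orthonormal basis of `ℝ^{d-1}`, and `r_j r*_j = ρ > 0` for all `j`. -/
def IsBallParams (n : ℕ) (zb : Pt n × Pt n) (e : Fin n → Vec n)
    (r rs : Fin n → ℝ) (ρ : ℝ) : Prop :=
  zb.2.2 = zb.1.2 - ‖zb.2.1 - zb.1.1‖ ^ 2 ∧ 0 < ρ ∧ Orthonormal ℝ e ∧
    (∀ j, 0 < r j) ∧ (∀ j, 0 < rs j) ∧ (∀ j, r j * rs j = ρ)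

/-- The ball `ℬ(z̄, e, r, r*)`, a subset of the incidence manifold
`ℐ = {(x,y) : y_d = x_d - |y' - x'|²} ⊆ ℝ^d × ℝ^d`. -/
def ballI (n : ℕ) (zb : Pt n × Pt n) (e : Fin n → Vec n)
    (r rs : Fin n → ℝ) (ρ : ℝ) : Set (Pt n × Pt n) :=
  fun z => z.2.2 = z.1.2 - ‖z.2.1 - z.1.1‖ ^ 2 ∧
    (∀ j, |⟪z.1.1 - zb.1.1, e j⟫| < r j) ∧
    |z.1.2 - zb.2.2 - ‖z.1.1 - zb.2.1‖ ^ 2| < ρ ∧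
    (∀ j, |⟪z.2.1 - zb.2.1, e j⟫| < rs j) ∧
    |z.2.2 - zb.1.2 + ‖z.2.1 - zb.1.1‖ ^ 2| < ρ

/-- The weak-type `L^{d+1,∞}` quasinorm `sup_{λ>0} λ |{g > λ}|^{1/(d+1)}`
of a nonnegative function `g`. -/
def weakN (n : ℕ) (q : ℝ) (g : Pt n → ℝ≥0∞) : ℝ≥0∞ :=
  ⨆ (lam : ℝ) (_ : 0 < lam),
    ENNReal.ofReal lam * volume {x : Pt n | ENNReal.ofReal lam < g x} ^ (1 / q)

/-
The shear `y ↦ (y', y_d + |y'|²)` straightens the translated paraboloids, so that `Tχ_E(x)` is the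
measure of a hyperplane section of the sheared set `E`, and the weak-type hypothesis provides a set
`G` of hyperplanes whose sections of `E` all have measure at least `L`. For fixed slopes
`a_0, …, a_n`, the intercepts of the hyperplanes through `y` depend linearly on `y` with determinant
`±n!` times the volume of the simplex spanned by the `a_i`. Hence the integral over `y` of this
volume, summed over all simplices of slopes of hyperplanes in `G` through `y`, is at most
`|G|^{n+1}`, and some `y` has a large set `A` of slopes whose simplices are small on average.

Among any `n + 2` slopes, the `n + 1` spanning the largest simplex have the remaining one in their
cell, so by averaging the cell of a single small simplex captures a large part of `A`. An affine
change of variables turns this cell into the unit cube and the hyperplanes through `y` into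
`s = t · u` with `‖t‖ ≤ 1`. Since `(u, s)` lies only on those with `t` in a set of width of order
`1/‖u‖`, most of the sections stay at bounded distance from `y`, hence inside a box. After undoing
the changes of variables, the singular vectors of the linear part supply the axes of a paraboloid
slab containing a large part of `E`; among its translates small enough to be balls of volume at
most `|E|`, of which `O(ε^{-C})` cover it, one captures its share of `E`.
-/

section StraightenedIncidence

open scoped NNReal Matrix

section Preliminaries

lemma enorm_det_mul_volume_preimage_mulVec {ι : Type*} [Fintype ι] [DecidableEq ι]
    {M : Matrix ι ι ℝ} (hM : M.det ≠ 0) (s : Set (ι → ℝ)) :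
    ‖M.det‖ₑ * volume (M.mulVec ⁻¹' s) = volume s := by
  have h := Measure.addHaar_preimage_linearMap (volume : Measure (ι → ℝ)) (f := Matrix.toLin' M)
    (by rwa [LinearMap.det_toLin']) s
  rw [LinearMap.det_toLin', ← Real.enorm_eq_ofReal_abs, enorm_inv hM] at h
  change ‖M.det‖ₑ * volume (Matrix.toLin' M ⁻¹' s) = _
  rw [h, ← mul_assoc, ENNReal.mul_inv_cancel (enorm_ne_zero.2 hM) enorm_ne_top, one_mul]

lemma enorm_det_mul_volume_preimage_add_mulVec {ι : Type*} [Fintype ι] [DecidableEq ι]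
    {M : Matrix ι ι ℝ} (hM : M.det ≠ 0) (c : ι → ℝ) (s : Set (ι → ℝ)) :
    ‖M.det‖ₑ * volume ((fun v => c + M *ᵥ v) ⁻¹' s) = volume s :=
  (enorm_det_mul_volume_preimage_mulVec hM ((c + ·) ⁻¹' s)).trans (measure_preimage_add volume c s)

lemma enorm_det_mul_volume_preimage_mulVec_le {ι : Type*} [Fintype ι] [DecidableEq ι]
    (M : Matrix ι ι ℝ) (s : Set (ι → ℝ)) :
    ‖M.det‖ₑ * volume (M.mulVec ⁻¹' s) ≤ volume s := by
  by_cases hM : M.det = 0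
  · simp [hM]
  · exact (enorm_det_mul_volume_preimage_mulVec hM s).le

variable {α β γ : Type*} [MeasurableSpace α] [MeasurableSpace β] [MeasurableSpace γ]

lemma measurePreserving_shear {μ : Measure α} {ν : Measure β} [SFinite μ] {f : α → β}
    (hf : MeasurePreserving f μ ν) {φ : α → ℝ} (hφ : Measurable φ) :
    MeasurePreserving (fun p : α × ℝ => (f p.1, p.2 + φ p.1))
      (μ.prod volume) (ν.prod volume) :=
  hf.skew_product (g := fun a s => s + φ a) (by fun_prop)
    (.of_forall fun a => map_add_right_eq_self volume (φ a))

lemma measurePreserving_prodRightComm (μ : Measure α) (ν : Measure β) (ξ : Measure γ)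
    [SFinite μ] [SFinite ν] [SFinite ξ] :
    MeasurePreserving (fun p : (α × β) × γ => ((p.1.1, p.2), p.1.2))
      ((μ.prod ν).prod ξ) ((μ.prod ξ).prod ν) :=
  ((measurePreserving_prodAssoc μ ξ ν).symm _).comp
    (((MeasurePreserving.id μ).prod Measure.measurePreserving_swap).comp
      (measurePreserving_prodAssoc μ ν ξ))

lemma measurableSet_forall_mem {ι : Type*} [Countable ι] {f : ι → α → β}
    (hf : ∀ i, Measurable (f i)) {s : Set β} (hs : MeasurableSet s) :
    MeasurableSet {x | ∀ i, f i x ∈ s} := by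
  rw [Set.ofPred_forall]
  exact .iInter fun i => hs.preimage (hf i)

lemma setLIntegral_measure_section (μ : Measure α) (ν : Measure β) [SFinite μ] [SFinite ν]
    (s : Set α) {t : Set (α × β)} (ht : MeasurableSet t) :
    ∫⁻ x in s, ν {y | (x, y) ∈ t} ∂μ = (μ.prod ν) (t ∩ s ×ˢ Set.univ) := by
  rw [← Measure.restrict_apply ht, ← Measure.restrict_prod_eq_prod_univ, Measure.prod_apply ht]
  rfl

end Preliminaries

section Sections

variable {n : ℕ}

/-- The part of `E` lying on the hyperplane `s = b + a · u` with parameters `p = (a, b)`,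
parametrised by `u`. -/
def hyperplaneSection (E : Set ((Fin n → ℝ) × ℝ)) (p : (Fin n → ℝ) × ℝ) : Set (Fin n → ℝ) :=
  {u | (u, p.2 + p.1 ⬝ᵥ u) ∈ E}

/-- The slopes `a` of the hyperplanes `s = b + a · u` through `y` whose parameters `(a, b)` lie
in `G`. -/
def pencilSection (G : Set ((Fin n → ℝ) × ℝ)) (y : (Fin n → ℝ) × ℝ) : Set (Fin n → ℝ) :=
  {a | (a, y.2 - a ⬝ᵥ y.1) ∈ G}

variable {E G : Set ((Fin n → ℝ) × ℝ)}

lemma measurableSet_pencilSection (hG : MeasurableSet G) (y : (Fin n → ℝ) × ℝ) :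
    MeasurableSet (pencilSection G y) :=
  hG.preimage (by fun_prop)

lemma measurable_volume_hyperplaneSection (hE : MeasurableSet E) :
    Measurable fun p => volume (hyperplaneSection E p) :=
  measurable_measure_prodMk_left (hE.preimage (f := fun q : ((Fin n → ℝ) × ℝ) × (Fin n → ℝ) =>
    (q.2, q.1.2 + q.1.1 ⬝ᵥ q.2)) (by fun_prop))

lemma lintegral_volume_hyperplaneSection (hE : MeasurableSet E) (hG : MeasurableSet G) :
    ∫⁻ p in G, volume (hyperplaneSection E p) = ∫⁻ y in E, volume (pencilSection G y) := by
  have hdual : MeasurePreserving (fun q : ((Fin n → ℝ) × ℝ) × (Fin n → ℝ) =>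
      ((q.2, q.1.2 + q.1.1 ⬝ᵥ q.2), q.1.1)) := by
    have hshear := measurePreserving_shear
      (φ := fun q : (Fin n → ℝ) × (Fin n → ℝ) => q.1 ⬝ᵥ q.2)
      (Measure.measurePreserving_swap (μ := volume) (ν := volume)) (by fun_prop)
    exact (measurePreserving_prodRightComm volume volume volume).comp
      (hshear.comp (measurePreserving_prodRightComm volume volume volume))
  have hEm : MeasurableSet {q : ((Fin n → ℝ) × ℝ) × (Fin n → ℝ) |
      q.2 ∈ hyperplaneSection E q.1} := hE.preimage (by fun_prop)
  have hGm : MeasurableSet {q : ((Fin n → ℝ) × ℝ) × (Fin n → ℝ) |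
      q.2 ∈ pencilSection G q.1} := hG.preimage (by fun_prop)
  have hleft := setLIntegral_measure_section volume volume G hEm
  have hright := setLIntegral_measure_section volume volume E hGm
  refine (hleft.trans ?_).trans hright.symm
  refine Eq.trans ?_ (hdual.measure_preimage
    (hGm.inter (hE.prod MeasurableSet.univ)).nullMeasurableSet)
  congr 1
  ext q
  simp [hyperplaneSection, pencilSection, and_comm]

end Sections

section Simplex

variable {n : ℕ}

/-- The matrix with rows `(1, a i)`, recording the vertices `a i` in homogeneous coordinates. -/
def homogMatrix (a : Fin (n + 1) → Fin n → ℝ) : Matrix (Fin (n + 1)) (Fin (n + 1)) ℝ :=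
  Matrix.of fun i => Fin.cons 1 (a i)

/-- The volume of the parallelepiped spanned by the simplex with vertices `a i`, that is `n!`
times the volume of this simplex. -/
def simplexVol (a : Fin (n + 1) → Fin n → ℝ) : ℝ≥0 :=
  ‖(homogMatrix a).det‖₊

/-- The matrix whose columns are the edges of the simplex emanating from its vertex `a 0`. -/
def edgeMatrix (a : Fin (n + 1) → Fin n → ℝ) : Matrix (Fin n) (Fin n) ℝ :=
  Matrix.of fun j i => a i.succ j - a 0 j

/-- The points which, substituted for any vertex, do not increase the volume of the simplex `a`. -/
def simplexCell (a : Fin (n + 1) → Fin n → ℝ) : Set (Fin n → ℝ) :=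
  {x | ∀ i, simplexVol (Function.update a i x) ≤ simplexVol a}

/-- The integral of the simplex volume over all simplices with vertices in `A`. -/
def simplexEnergy (A : Set (Fin n → ℝ)) : ℝ≥0∞ :=
  ∫⁻ a in Set.univ.pi fun _ : Fin (n + 1) => A, simplexVol a

lemma simplexEnergy_mono {A B : Set (Fin n → ℝ)} (h : A ⊆ B) :
    simplexEnergy A ≤ simplexEnergy B :=
  lintegral_mono_set (Set.pi_mono fun _ _ => h)

@[fun_prop]
lemma continuous_simplexVol : Continuous (simplexVol (n := n)) := by
  refine continuous_nnnorm.comp (Continuous.matrix_det (continuous_matrix fun i j => ?_))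
  refine Fin.cases ?_ (fun j => ?_) j <;> simp only [homogMatrix, Matrix.of_apply, Fin.cons_zero,
    Fin.cons_succ] <;> fun_prop

lemma simplexVol_comp_perm (a : Fin (n + 1) → Fin n → ℝ) (σ : Equiv.Perm (Fin (n + 1))) :
    simplexVol (a ∘ σ) = simplexVol a := by
  have hrows : homogMatrix (a ∘ σ) = (homogMatrix a).submatrix σ id := rfl
  rw [simplexVol, hrows, Matrix.det_permute, nnnorm_mul, simplexVol]
  rcases Int.units_eq_one_or (Equiv.Perm.sign σ) with h | h <;> simp [h]

lemma homogMatrix_update (a : Fin (n + 1) → Fin n → ℝ) (i : Fin (n + 1)) (x : Fin n → ℝ) :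
    homogMatrix (Function.update a i x) = (homogMatrix a).updateRow i (Fin.cons 1 x) := by
  ext k j
  obtain rfl | h := eq_or_ne k i
  · simp [homogMatrix]
  · simp [homogMatrix, h]

lemma simplexVol_eq_nnnorm_det_edgeMatrix (a : Fin (n + 1) → Fin n → ℝ) :
    simplexVol a = ‖(edgeMatrix a).det‖₊ := by
  have hrow : (homogMatrix a).det = (Matrix.of (Fin.cons (Fin.cons 1 (a 0))
      fun i => Fin.cons 0 ((edgeMatrix a)ᵀ i))).det := by
    refine Matrix.det_eq_of_forall_row_eq_smul_add_const (Fin.cons 0 fun _ => 1) 0 (by simp) ?_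
    intro i j
    refine Fin.cases ?_ (fun i => ?_) i <;> refine Fin.cases ?_ (fun j => ?_) j <;>
      simp [homogMatrix, edgeMatrix]
  rw [simplexVol, hrow, Matrix.det_succ_column_zero, Fin.sum_univ_succ, ← Matrix.det_transpose]
  simp only [Matrix.of_apply, Fin.cons_zero, Fin.cons_succ, Fin.val_zero, pow_zero, mul_zero,
    zero_mul, Finset.sum_const_zero, add_zero, one_mul]
  rfl

lemma measurePreserving_cons_neg :
    MeasurePreserving (fun y : (Fin n → ℝ) × ℝ => (Fin.cons y.2 (-y.1) : Fin (n + 1) → ℝ)) := by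
  have hcons := (volume_preserving_piFinSuccAbove (fun _ : Fin (n + 1) => ℝ) 0).symm
  have hswap : MeasurePreserving (fun y : (Fin n → ℝ) × ℝ => (y.2, -y.1)) :=
    ((MeasurePreserving.id volume).prod (Measure.measurePreserving_neg volume)).comp
      Measure.measurePreserving_swap
  convert hcons.comp hswap using 1
  ext y i
  refine Fin.cases ?_ (fun i => ?_) i <;> simp [MeasurableEquiv.piFinSuccAbove]

lemma lintegral_volume_forall_section {ι : Type*} [Fintype ι] {G : Set ((Fin n → ℝ) × ℝ)}
    (hG : MeasurableSet G) :
    ∫⁻ a : ι → Fin n → ℝ, volume {b : ι → ℝ | ∀ i, (a i, b i) ∈ G} =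
      volume G ^ Fintype.card ι := by
  have he := (volume_measurePreserving_arrowProdEquivProdArrow (Fin n → ℝ) ℝ ι).symm
  have hm : MeasurableSet {q : (ι → Fin n → ℝ) × (ι → ℝ) | ∀ i, (q.1 i, q.2 i) ∈ G} :=
    measurableSet_forall_mem (by fun_prop) hG
  refine (Measure.prod_apply hm).symm.trans ?_
  have hpre : {q : (ι → Fin n → ℝ) × (ι → ℝ) | ∀ i, (q.1 i, q.2 i) ∈ G} =
      (MeasurableEquiv.arrowProdEquivProdArrow (Fin n → ℝ) ℝ ι).symm ⁻¹'
        Set.univ.pi fun _ => G := by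
    ext q
    simp only [Set.mem_preimage, Set.mem_univ_pi]
    rfl
  rw [← Measure.volume_eq_prod, hpre, he.measure_preimage_equiv, volume_pi_pi, Finset.prod_const,
    Finset.card_univ]

lemma simplexVol_mul_volume_pencil_le (a : Fin (n + 1) → Fin n → ℝ)
    (G : Set ((Fin n → ℝ) × ℝ)) (hG : MeasurableSet G) :
    simplexVol a * volume {y | ∀ i, a i ∈ pencilSection G y} ≤
      volume {b : Fin (n + 1) → ℝ | ∀ i, (a i, b i) ∈ G} := by
  refine le_of_eq_of_le ?_ (enorm_det_mul_volume_preimage_mulVec_le (homogMatrix a) _)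
  have hm : MeasurableSet {b : Fin (n + 1) → ℝ | ∀ i, (a i, b i) ∈ G} :=
    measurableSet_forall_mem (by fun_prop) hG
  rw [← measurePreserving_cons_neg.measure_preimage
    (hm.preimage (by fun_prop)).nullMeasurableSet]
  congr 2
  ext y
  simp [pencilSection, homogMatrix, Matrix.mulVec, dotProduct, Fin.sum_univ_succ, sub_eq_add_neg]

theorem lintegral_simplexEnergy_pencilSection_le {G : Set ((Fin n → ℝ) × ℝ)}
    (hG : MeasurableSet G) :
    ∫⁻ y, simplexEnergy (pencilSection G y) ≤ volume G ^ (n + 1) := by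
  have hW : MeasurableSet {q : ((Fin n → ℝ) × ℝ) × (Fin (n + 1) → Fin n → ℝ) |
      ∀ i, q.2 i ∈ pencilSection G q.1} :=
    measurableSet_forall_mem (f := fun i (q : ((Fin n → ℝ) × ℝ) × (Fin (n + 1) → Fin n → ℝ)) =>
      (q.2 i, q.1.2 - q.2 i ⬝ᵥ q.1.1)) (by fun_prop) hG
  calc ∫⁻ y, simplexEnergy (pencilSection G y)
      = ∫⁻ y, ∫⁻ a : Fin (n + 1) → Fin n → ℝ, {a | ∀ i, a i ∈ pencilSection G y}.indicator
          (fun a => (simplexVol a : ℝ≥0∞)) a := by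
        refine lintegral_congr fun y => ?_
        rw [simplexEnergy, ← lintegral_indicator
          (.univ_pi fun _ => measurableSet_pencilSection hG y), Set.pi]
        simp only [Set.mem_univ, true_imp_iff]
    _ = ∫⁻ a : Fin (n + 1) → Fin n → ℝ, ∫⁻ y, {y | ∀ i, a i ∈ pencilSection G y}.indicator
          (fun _ => (simplexVol a : ℝ≥0∞)) y := by
        refine lintegral_lintegral_swap (Measurable.aemeasurable ?_)
        exact Measurable.indicator (f := fun q : ((Fin n → ℝ) × ℝ) × (Fin (n + 1) → Fin n → ℝ) =>
          (simplexVol q.2 : ℝ≥0∞)) (by fun_prop) hW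
    _ = ∫⁻ a : Fin (n + 1) → Fin n → ℝ,
          simplexVol a * volume {y | ∀ i, a i ∈ pencilSection G y} :=
        lintegral_congr fun a => lintegral_indicator_const (measurable_prodMk_right hW) _
    _ ≤ ∫⁻ a : Fin (n + 1) → Fin n → ℝ, volume {b : Fin (n + 1) → ℝ | ∀ i, (a i, b i) ∈ G} :=
        lintegral_mono fun a => simplexVol_mul_volume_pencil_le a G hG
    _ = volume G ^ (n + 1) := by rw [lintegral_volume_forall_section hG, Fintype.card_fin]

end Simplex

section Averaging

variable {n : ℕ}

theorem exists_subset_pencilSection {E G : Set ((Fin n → ℝ) × ℝ)} (hE : MeasurableSet E)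
    (hG : MeasurableSet G) {e f L : ℝ≥0} (he : volume E = e) (he0 : e ≠ 0) (hf : volume G = f)
    (hf0 : f ≠ 0) (hL0 : L ≠ 0) (hL : ∀ p ∈ G, L ≤ volume (hyperplaneSection E p)) :
    ∃ y, ∃ A ⊆ pencilSection G y, MeasurableSet A ∧ ∃ m : ℝ≥0, volume A = m ∧
      L * f / (4 * e) < m ∧ (L / (4 * f ^ n) : ℝ≥0) * simplexEnergy A ≤ m := by
  obtain ⟨y, hy⟩ : ∃ y, (L * f / (4 * e) : ℝ≥0) +
      (L / (4 * f ^ n) : ℝ≥0) * simplexEnergy (pencilSection G y) < volume (pencilSection G y) := by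
    by_contra! hcon
    have hint : (L * f : ℝ≥0∞) ≤
        (L * f / (4 * e) : ℝ≥0) * e + (L / (4 * f ^ n) : ℝ≥0) * f ^ (n + 1) :=
      calc (L * f : ℝ≥0∞) ≤ ∫⁻ p in G, volume (hyperplaneSection E p) := by
            rw [← hf, ← setLIntegral_const]
            exact setLIntegral_mono' hG hL
        _ = ∫⁻ y in E, volume (pencilSection G y) := lintegral_volume_hyperplaneSection hE hG
        _ ≤ ∫⁻ y in E, ((L * f / (4 * e) : ℝ≥0) +
              (L / (4 * f ^ n) : ℝ≥0) * simplexEnergy (pencilSection G y)) :=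
            lintegral_mono hcon
        _ = (L * f / (4 * e) : ℝ≥0) * e +
              (L / (4 * f ^ n) : ℝ≥0) * ∫⁻ y in E, simplexEnergy (pencilSection G y) := by
            rw [lintegral_add_left measurable_const, setLIntegral_const, he,
              lintegral_const_mul' _ _ coe_ne_top]
        _ ≤ _ := by
            rw [← hf]
            gcongr
            exact (setLIntegral_le_lintegral _ _).trans
              (lintegral_simplexEnergy_pencilSection_le hG)
    have hhalf : L * f / (4 * e) * e + L / (4 * f ^ n) * f ^ (n + 1) = L * f / 2 := by
      field_simp
      ring
    norm_cast at hint
    rw [hhalf] at hint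
    exact (NNReal.half_lt_self (mul_ne_zero hL0 hf0)).not_ge hint
  obtain ⟨A, hA, hAG, hlt, hAtop⟩ :=
    Measure.exists_subset_measure_lt_top (measurableSet_pencilSection hG y) hy
  lift volume A to ℝ≥0 using hAtop.ne with m hm
  refine ⟨y, A, hAG, hA, m, hm.symm, ?_, ?_⟩
  · exact_mod_cast le_self_add.trans_lt hlt
  · exact (le_add_self.trans' (by gcongr; exact simplexEnergy_mono hAG)).trans hlt.le

end Averaging

section DominatingSimplex

lemma exists_perm_succAbove_comp {m : ℕ} {f : Fin m → Fin (m + 1)} (hf : Function.Injective f)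
    {k : Fin (m + 1)} (hk : ∀ i, f i ≠ k) : ∃ σ : Equiv.Perm (Fin m), f = k.succAbove ∘ σ := by
  choose σ hσ using fun i => Fin.exists_succAbove_eq (hk i)
  have hσinj : Function.Injective σ := fun i j hij => hf (by rw [← hσ, ← hσ, hij])
  exact ⟨.ofBijective σ (Finite.injective_iff_bijective.1 hσinj), funext fun i => (hσ i).symm⟩

variable {n : ℕ}

lemma exists_mem_simplexCell_succAbove (z : Fin (n + 2) → Fin n → ℝ) :
    ∃ j, z j ∈ simplexCell (z ∘ j.succAbove) := by
  obtain ⟨j, hj⟩ := Finite.exists_max fun j : Fin (n + 2) => simplexVol (z ∘ j.succAbove)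
  refine ⟨j, fun i => ?_⟩
  obtain ⟨σ, hσ⟩ : ∃ σ : Equiv.Perm (Fin (n + 1)),
      Function.update j.succAbove i j = (j.succAbove i).succAbove ∘ σ := by
    refine exists_perm_succAbove_comp (fun l l' h => ?_) fun l => ?_
    · by_cases hl : l = i <;> by_cases hl' : l' = i <;>
        simp_all [Fin.ne_succAbove]
    · by_cases hl : l = i <;> simp [hl, Fin.ne_succAbove]
  rw [← Function.comp_update, hσ, ← Function.comp_assoc, simplexVol_comp_perm]
  exact hj _

lemma measurableSet_mem_simplexCell : MeasurableSet
    {q : (Fin (n + 1) → Fin n → ℝ) × (Fin n → ℝ) | q.2 ∈ simplexCell q.1} := by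
  refine measurableSet_setOfPred.2 (.forall fun i => measurableSet_setOfPred.1 ?_)
  exact measurableSet_le (continuous_simplexVol.comp
    (continuous_fst.update i continuous_snd)).measurable (by fun_prop)

theorem volume_pow_le_setLIntegral_inter_simplexCell {A : Set (Fin n → ℝ)}
    (hA : MeasurableSet A) :
    volume A ^ (n + 2) ≤ (n + 2) *
      ∫⁻ a in Set.univ.pi fun _ : Fin (n + 1) => A, volume (A ∩ simplexCell a) := by
  set B : Set ((Fin (n + 1) → Fin n → ℝ) × (Fin n → ℝ)) :=
    {q | q.2 ∈ A ∩ simplexCell q.1} ∩ (Set.univ.pi fun _ => A) ×ˢ Set.univ with hB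
  have hmem : MeasurableSet {q : (Fin (n + 1) → Fin n → ℝ) × (Fin n → ℝ) |
      q.2 ∈ A ∩ simplexCell q.1} :=
    (hA.preimage measurable_snd).inter measurableSet_mem_simplexCell
  have hBm : MeasurableSet B := hmem.inter (.prod (.univ_pi fun _ => hA) .univ)
  let drop (j : Fin (n + 2)) (z : Fin (n + 2) → Fin n → ℝ) := (z ∘ j.succAbove, z j)
  have hdrop (j : Fin (n + 2)) : MeasurePreserving (drop j) :=
    Measure.measurePreserving_swap.comp
      (volume_preserving_piFinSuccAbove (fun _ : Fin (n + 2) => Fin n → ℝ) j)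
  have hcover : (Set.univ.pi fun _ => A) ⊆ ⋃ j, drop j ⁻¹' B := fun z hz => by
    obtain ⟨j, hj⟩ := exists_mem_simplexCell_succAbove z
    rw [Set.mem_univ_pi] at hz
    exact Set.mem_iUnion.2 ⟨j, ⟨hz j, hj⟩, fun i _ => hz _, trivial⟩
  calc volume A ^ (n + 2) = volume (Set.univ.pi fun _ : Fin (n + 2) => A) := by
        simp [volume_pi_pi]
    _ ≤ ∑ j : Fin (n + 2), volume (drop j ⁻¹' B) :=
        (measure_mono hcover).trans (measure_iUnion_fintype_le _ _)
    _ = (n + 2) * volume B := by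
        simp [(hdrop _).measure_preimage hBm.nullMeasurableSet]
    _ = _ := by rw [hB, Measure.volume_eq_prod, ← setLIntegral_measure_section _ _ _ hmem]; rfl

lemma ae_simplexVol_ne_zero : ∀ᵐ a : Fin (n + 1) → Fin n → ℝ, simplexVol a ≠ 0 := by
  have hm : MeasurableSet {a : Fin (n + 1) → Fin n → ℝ | simplexVol a ≠ 0} :=
    (isOpen_ne_fun continuous_simplexVol continuous_const).measurableSet
  -- Adding `t` times the standard simplex to `y` shifts its edge matrix by `t`.
  let v : Fin (n + 1) → Fin n → ℝ := Fin.cons 0 fun i => Pi.single i 1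
  refine ae_mem_of_ae_add_linearMap_mem (LinearMap.toSpanSingleton ℝ _ v) volume volume hm ?_
  intro y
  have hshift (t : ℝ) : edgeMatrix (y + LinearMap.toSpanSingleton ℝ _ v t) =
      -(Matrix.scalar (Fin n) (-t) - edgeMatrix y) := by
    ext j i
    simp only [edgeMatrix, v, Matrix.of_apply, Matrix.neg_apply, Matrix.sub_apply,
      Matrix.scalar_apply, Matrix.diagonal_apply, Pi.add_apply, Pi.smul_apply, Fin.cons_succ,
      Fin.cons_zero, LinearMap.toSpanSingleton_apply, Pi.single_apply, smul_eq_mul, Pi.zero_apply]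
    split_ifs <;> ring
  have hroots : {t : ℝ | ¬ y + LinearMap.toSpanSingleton ℝ _ v t ∈ {a | simplexVol a ≠ 0}} =
      Neg.neg ⁻¹' {s | (edgeMatrix y).charpoly.IsRoot s} := by
    ext t
    simp only [simplexVol_eq_nnnorm_det_edgeMatrix, hshift, Matrix.det_neg, Set.mem_ofPred_eq,
      Set.mem_preimage, Polynomial.IsRoot.def, Matrix.eval_charpoly, ne_eq, not_not,
      nnnorm_eq_zero, mul_eq_zero, pow_eq_zero_iff', neg_eq_zero, one_ne_zero, false_and, false_or]
  have hfinite := (Polynomial.finite_setOfPred_isRoot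
    (Matrix.charpoly_monic (edgeMatrix y)).ne_zero).preimage neg_injective.injOn
  exact (hroots ▸ hfinite).measure_zero volume

theorem exists_simplex_lt_volume_inter_simplexCell {A : Set (Fin n → ℝ)} (hA : MeasurableSet A)
    {m κ : ℝ≥0} (hm : volume A = m) (hm0 : m ≠ 0) (hκ : κ * simplexEnergy A ≤ m) :
    ∃ a : Fin (n + 1) → Fin n → ℝ, simplexVol a ≠ 0 ∧
      m + κ * m ^ (n + 1) * simplexVol a < 4 * (n + 2) * volume (A ∩ simplexCell a) := by
  by_contra! hcon
  have hpi : volume (Set.univ.pi fun _ : Fin (n + 1) => A) = m ^ (n + 1) := by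
    simp [volume_pi_pi, hm]
  have hint : (4 * m ^ (n + 2) : ℝ≥0∞) ≤ m * m ^ (n + 1) + κ * m ^ (n + 1) * simplexEnergy A :=
    calc (4 * m ^ (n + 2) : ℝ≥0∞)
        ≤ 4 * ((n + 2) * ∫⁻ a in Set.univ.pi fun _ : Fin (n + 1) => A,
            volume (A ∩ simplexCell a)) := by
          rw [← hm]
          gcongr
          exact volume_pow_le_setLIntegral_inter_simplexCell hA
      _ = ∫⁻ a in Set.univ.pi fun _ : Fin (n + 1) => A,
            4 * (n + 2) * volume (A ∩ simplexCell a) := by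
          rw [← mul_assoc, lintegral_const_mul' _ _ (by finiteness)]
      _ ≤ ∫⁻ a in Set.univ.pi fun _ : Fin (n + 1) => A,
            (m + κ * m ^ (n + 1) * simplexVol a : ℝ≥0∞) :=
          lintegral_mono_ae (ae_restrict_of_ae (ae_simplexVol_ne_zero.mono hcon))
      _ = m * m ^ (n + 1) + κ * m ^ (n + 1) * simplexEnergy A := by
          rw [lintegral_add_left measurable_const, setLIntegral_const, hpi,
            lintegral_const_mul' _ _ (by finiteness), simplexEnergy]
  have hbound : (4 * m ^ (n + 2) : ℝ≥0∞) ≤ 2 * m ^ (n + 2) :=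
    calc (4 * m ^ (n + 2) : ℝ≥0∞) ≤ m * m ^ (n + 1) + m ^ (n + 1) * (κ * simplexEnergy A) :=
          hint.trans_eq (by ring)
      _ ≤ m * m ^ (n + 1) + m ^ (n + 1) * m := by gcongr
      _ = 2 * m ^ (n + 2) := by ring
  have hpos : 0 < m ^ (n + 2) := by positivity
  norm_cast at hbound
  linarith [NNReal.coe_le_coe.2 hbound]

lemma exists_eq_add_edgeMatrix_mulVec {a : Fin (n + 1) → Fin n → ℝ} (ha : simplexVol a ≠ 0)
    {x : Fin n → ℝ} (hx : x ∈ simplexCell a) :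
    ∃ t ∈ Metric.closedBall (0 : Fin n → ℝ) 1, x = a 0 + edgeMatrix a *ᵥ t := by
  have hd : (homogMatrix a).det ≠ 0 := nnnorm_ne_zero_iff.1 ha
  -- Cramer's rule: `c i / det` are the barycentric coordinates of `x`.
  set c := (homogMatrix a)ᵀ.cramer (Fin.cons 1 x) with hc
  have hcramer : (homogMatrix a)ᵀ *ᵥ c = (homogMatrix a).det • Fin.cons 1 x := by
    rw [hc, Matrix.mulVec_cramer, Matrix.det_transpose]
  have hci (i : Fin (n + 1)) : |c i| ≤ |(homogMatrix a).det| := by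
    rw [hc, Matrix.cramer_transpose_apply, ← homogMatrix_update]
    exact hx i
  have hsum : c 0 + ∑ i : Fin n, c i.succ = (homogMatrix a).det := by
    simpa [Matrix.mulVec, dotProduct, homogMatrix, Fin.sum_univ_succ] using congrFun hcramer 0
  have hcoord (j : Fin n) :
      a 0 j * c 0 + ∑ i : Fin n, a i.succ j * c i.succ = (homogMatrix a).det * x j := by
    simpa [Matrix.mulVec, dotProduct, homogMatrix, Fin.sum_univ_succ] using
      congrFun hcramer j.succ
  refine ⟨(homogMatrix a).det⁻¹ • fun i => c i.succ, ?_, ?_⟩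
  · rw [mem_closedBall_zero_iff, pi_norm_le_iff_of_nonneg zero_le_one]
    intro i
    rw [Pi.smul_apply, smul_eq_mul, norm_mul, norm_inv, inv_mul_le_iff₀ (norm_pos_iff.2 hd),
      mul_one]
    exact hci i.succ
  · rw [Matrix.mulVec_smul]
    ext j
    have hedge : (edgeMatrix a *ᵥ fun i => c i.succ) j =
        ∑ i : Fin n, a i.succ j * c i.succ - a 0 j * ∑ i : Fin n, c i.succ := by
      simp [edgeMatrix, Matrix.mulVec, dotProduct, sub_mul, Finset.mul_sum]
    rw [Pi.add_apply, Pi.smul_apply, hedge, smul_eq_mul, ← sub_eq_iff_eq_add',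
      eq_inv_mul_iff_mul_eq₀ hd]
    linear_combination a 0 j * hsum - hcoord j

end DominatingSimplex

section ReferenceBox

lemma le_two_mul_of_le_add_of_four_mul_le {x a b c : ℝ≥0∞} (hx : x ≠ ⊤) (h : x ≤ a + (b + c))
    (ha : 4 * a ≤ x) (hc : 4 * c ≤ x) : x ≤ 2 * b := by
  obtain rfl | hb := eq_or_ne b ⊤
  · simp
  have ha' : a ≠ ⊤ := by rintro rfl; simp_all
  have hc' : c ≠ ⊤ := by rintro rfl; simp_all
  lift x to ℝ≥0 using hx
  lift a to ℝ≥0 using ha'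
  lift b to ℝ≥0 using hb
  lift c to ℝ≥0 using hc'
  norm_cast at *
  rw [← NNReal.coe_le_coe] at *
  push_cast at *
  linarith

lemma enorm_mul_volume_closedBall_inter_dotProduct_le {ι : Type*} [Fintype ι] (v : ι → ℝ)
    (B : Set ℝ) :
    ‖v‖ₑ * volume (Metric.closedBall 0 1 ∩ {t : ι → ℝ | t ⬝ᵥ v ∈ B}) ≤
      2 ^ Fintype.card ι * volume B := by
  classical
  rcases isEmpty_or_nonempty ι with hι | hι
  · simp [Subsingleton.elim v 0]
  obtain ⟨i, hi⟩ : ∃ i, ‖v‖ = ‖v i‖ := by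
    obtain ⟨i, hi⟩ := Finite.exists_max fun i => ‖v i‖
    exact ⟨i, ((pi_norm_le_iff_of_nonempty v).2 hi).antisymm (norm_le_pi_norm v i)⟩
  -- Replace the coordinate `t i` by `t ⬝ᵥ v`; the Jacobian is `v i`.
  set M : Matrix ι ι ℝ := (1 : Matrix ι ι ℝ).updateRow i v
  have hdet : M.det = v i := by
    rw [← Matrix.cramer_transpose_apply, Matrix.transpose_one, Matrix.cramer_one]
    rfl
  have hsub : Metric.closedBall 0 1 ∩ {t : ι → ℝ | t ⬝ᵥ v ∈ B} ⊆
      M.mulVec ⁻¹' Set.univ.pi (Function.update (fun _ => Metric.closedBall 0 1) i B) := by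
    rintro t ⟨ht, htB⟩ j -
    obtain rfl | hj := eq_or_ne j i
    · simpa [M, Matrix.mulVec, dotProduct_comm] using htB
    · have hMj : (M *ᵥ t) j = t j := by
        rw [Matrix.updateRow_mulVec, Function.update_of_ne hj, Matrix.one_mulVec]
      simpa [hMj, hj] using (norm_le_pi_norm t j).trans (mem_closedBall_zero_iff.1 ht)
  calc ‖v‖ₑ * volume (Metric.closedBall 0 1 ∩ {t : ι → ℝ | t ⬝ᵥ v ∈ B})
      ≤ ‖M.det‖ₑ * volume (M.mulVec ⁻¹'
          Set.univ.pi (Function.update (fun _ => Metric.closedBall 0 1) i B)) := by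
        rw [hdet, enorm_eq_iff_norm_eq.2 hi]
        gcongr
    _ ≤ volume (Set.univ.pi (Function.update (fun _ => Metric.closedBall (0 : ℝ) 1) i B)) :=
        enorm_det_mul_volume_preimage_mulVec_le M _
    _ = volume B * 2 ^ (Fintype.card ι - 1) := by
        rw [volume_pi_pi, ← Finset.mul_prod_erase _ _ (Finset.mem_univ i), Function.update_self,
          Finset.prod_congr rfl fun j hj => by
            rw [Function.update_of_ne (Finset.ne_of_mem_erase hj)]]
        simp
    _ ≤ 2 ^ Fintype.card ι * volume B := by
        rw [mul_comm]
        gcongr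
        · norm_num
        · exact Nat.sub_le _ _

variable {n : ℕ}

lemma norm_dotProduct_le (t u : Fin n → ℝ) : ‖t ⬝ᵥ u‖ ≤ n * (‖t‖ * ‖u‖) :=
  calc ‖t ⬝ᵥ u‖ ≤ ∑ i, ‖t i * u i‖ := norm_sum_le _ _
    _ ≤ ∑ _i : Fin n, ‖t‖ * ‖u‖ := by
        gcongr with i
        rw [norm_mul]
        gcongr <;> exact norm_le_pi_norm _ i
    _ = n * (‖t‖ * ‖u‖) := by simp

/-- The box that affine maps carry to neighbourhoods of hyperplane pieces. The factor `n` makes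
it contain the part over `‖u‖ ≤ k` of every hyperplane `s = t · u` with `‖t‖ ≤ 1`, the norms
being sup norms. -/
def referenceBox (n : ℕ) (k : ℝ≥0) : Set ((Fin n → ℝ) × ℝ) :=
  Metric.closedBall 0 k ×ˢ Metric.closedBall 0 (n * k)

lemma measurable_volume_inter_hyperplaneSection {F : Set ((Fin n → ℝ) × ℝ)}
    (hF : MeasurableSet F) {Ω : Set (Fin n → ℝ)} (hΩ : MeasurableSet Ω) :
    Measurable fun t => volume (Ω ∩ hyperplaneSection F (t, 0)) :=
  measurable_measure_prodMk_left (s := {q : (Fin n → ℝ) × (Fin n → ℝ) |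
    q.2 ∈ Ω ∩ hyperplaneSection F (q.1, 0)})
    ((hΩ.preimage measurable_snd).inter (hF.preimage (by fun_prop)))

lemma mul_setLIntegral_inter_hyperplaneSection_le {F : Set ((Fin n → ℝ) × ℝ)}
    (hF : MeasurableSet F) {Ω : Set (Fin n → ℝ)} (hΩ : MeasurableSet Ω) {h : ℝ≥0}
    (hh : ∀ u ∈ Ω, h ≤ ‖u‖) :
    h * ∫⁻ t in Metric.closedBall 0 1, volume (Ω ∩ hyperplaneSection F (t, 0)) ≤
      2 ^ n * volume F := by
  have hm : MeasurableSet {q : (Fin n → ℝ) × (Fin n → ℝ) |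
      q.2 ∈ Ω ∩ hyperplaneSection F (q.1, 0)} :=
    (hΩ.preimage measurable_snd).inter (hF.preimage (by fun_prop))
  have hfibre (u : Fin n → ℝ) : h * volume ((fun t => (t, u)) ⁻¹'
      ({q | q.2 ∈ Ω ∩ hyperplaneSection F (q.1, 0)} ∩ Metric.closedBall 0 1 ×ˢ Set.univ)) ≤
      2 ^ n * volume (Prod.mk u ⁻¹' F) := by
    by_cases hu : u ∈ Ω
    · calc _ ≤ ‖u‖ₑ * volume (Metric.closedBall 0 1 ∩ {t | t ⬝ᵥ u ∈ Prod.mk u ⁻¹' F}) := by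
            gcongr
            · exact ENNReal.coe_le_coe.2 (hh u hu)
            · rintro t ⟨⟨-, ht⟩, ht1, -⟩
              exact ⟨ht1, by simpa [hyperplaneSection] using ht⟩
        _ ≤ _ := by simpa using enorm_mul_volume_closedBall_inter_dotProduct_le u (Prod.mk u ⁻¹' F)
    · simp [hu]
  calc _ = h * ∫⁻ u, volume ((fun t => (t, u)) ⁻¹' ({q : (Fin n → ℝ) × (Fin n → ℝ) |
          q.2 ∈ Ω ∩ hyperplaneSection F (q.1, 0)} ∩ Metric.closedBall 0 1 ×ˢ Set.univ)) := by
        rw [← Measure.prod_apply_symm (hm.inter (measurableSet_closedBall.prod .univ)),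
          ← setLIntegral_measure_section _ _ _ hm]
        rfl
    _ ≤ ∫⁻ u, 2 ^ n * volume (Prod.mk u ⁻¹' F) := by
        rw [← lintegral_const_mul' _ _ coe_ne_top]
        exact lintegral_mono hfibre
    _ = 2 ^ n * volume F := by
        rw [lintegral_const_mul' _ _ (by finiteness), ← Measure.prod_apply hF]
        rfl

lemma hyperplaneSection_subset_union (F : Set ((Fin n → ℝ) × ℝ)) {t : Fin n → ℝ}
    (ht : t ∈ Metric.closedBall 0 1) (δ k : ℝ≥0) :
    hyperplaneSection F (t, 0) ⊆ Metric.closedBall 0 δ ∪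
      ({u | δ ≤ ‖u‖} ∩ hyperplaneSection (F ∩ referenceBox n k) (t, 0) ∪
        {u | k ≤ ‖u‖} ∩ hyperplaneSection F (t, 0)) := by
  intro u hu
  rcases le_total ‖u‖ δ with hδ | hδ
  · exact .inl (by simpa using hδ)
  rcases le_total (k : ℝ) ‖u‖ with hk | hk
  · exact .inr (.inr ⟨hk, hu⟩)
  refine .inr (.inl ⟨hδ, hu, by simpa using hk, ?_⟩)
  rw [mem_closedBall_zero_iff] at ht ⊢
  have htu : ‖t‖ * ‖u‖ ≤ k := (mul_le_of_le_one_left (norm_nonneg u) ht).trans hk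
  simpa using (norm_dotProduct_le t u).trans (by gcongr)

lemma mul_volume_le_setLIntegral_near_add_box_add_far {T : Set (Fin n → ℝ)} (hT : MeasurableSet T)
    (hT1 : T ⊆ Metric.closedBall 0 1) {F : Set ((Fin n → ℝ) × ℝ)} (hF : MeasurableSet F)
    {L : ℝ≥0} (hL : ∀ t ∈ T, L ≤ volume (hyperplaneSection F (t, 0))) (δ k : ℝ≥0) :
    L * volume T ≤ (∫⁻ _t in T, volume (Metric.closedBall (0 : Fin n → ℝ) δ)) +
      ((∫⁻ t in T, volume ({u | δ ≤ ‖u‖} ∩ hyperplaneSection (F ∩ referenceBox n k) (t, 0))) +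
        ∫⁻ t in T, volume ({u | k ≤ ‖u‖} ∩ hyperplaneSection F (t, 0))) := by
  have hbox : Measurable fun t => volume
      ({u | δ ≤ ‖u‖} ∩ hyperplaneSection (F ∩ referenceBox n k) (t, 0)) :=
    measurable_volume_inter_hyperplaneSection
      (hF.inter (measurableSet_closedBall.prod measurableSet_closedBall))
      (measurableSet_le measurable_const measurable_norm)
  rw [← setLIntegral_const, ← lintegral_add_left hbox, ← lintegral_add_left measurable_const]
  refine setLIntegral_mono' hT fun t ht => (hL t ht).trans ?_
  refine (measure_mono (hyperplaneSection_subset_union F (hT1 ht) δ k)).trans ?_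
  exact (measure_union_le _ _).trans (by gcongr; exact measure_union_le _ _)

theorem mul_le_volume_inter_referenceBox {T : Set (Fin n → ℝ)} (hT : MeasurableSet T)
    (hT1 : T ⊆ Metric.closedBall 0 1) {F : Set ((Fin n → ℝ) × ℝ)} (hF : MeasurableSet F)
    {L k δ : ℝ≥0} (hL : ∀ t ∈ T, L ≤ volume (hyperplaneSection F (t, 0))) (hk0 : k ≠ 0)
    (hk : 4 * (2 ^ n * volume F) ≤ k * (L * volume T))
    (hδ : 4 * volume (Metric.closedBall (0 : Fin n → ℝ) δ) ≤ L) :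
    δ * (L * volume T) ≤ 2 ^ (n + 1) * volume (F ∩ referenceBox n k) := by
  set near := ∫⁻ _t in T, volume (Metric.closedBall (0 : Fin n → ℝ) δ)
  set main := ∫⁻ t in T,
    volume ({u | δ ≤ ‖u‖} ∩ hyperplaneSection (F ∩ referenceBox n k) (t, 0))
  set far := ∫⁻ t in T, volume ({u | k ≤ ‖u‖} ∩ hyperplaneSection F (t, 0))
  have hsplit : L * volume T ≤ near + (main + far) :=
    mul_volume_le_setLIntegral_near_add_box_add_far hT hT1 hF hL δ k
  have hnear : 4 * near ≤ L * volume T := by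
    simp only [near, setLIntegral_const, ← mul_assoc]
    gcongr
  have hfar : 4 * far ≤ L * volume T := by
    have hle := mul_setLIntegral_inter_hyperplaneSection_le hF
      (measurableSet_le (measurable_const (a := (k : ℝ))) measurable_norm) fun _ hu => hu
    refine (ENNReal.mul_le_mul_iff_right (a := k) (by simpa) coe_ne_top).1 ?_
    calc k * (4 * far) = 4 * (k * far) := mul_left_comm _ _ _
      _ ≤ 4 * (2 ^ n * volume F) :=
        mul_le_mul_right ((mul_le_mul_right (lintegral_mono_set hT1) _).trans hle) _
      _ ≤ k * (L * volume T) := hk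
  have hmain : δ * main ≤ 2 ^ n * volume (F ∩ referenceBox n k) := by
    have hle := mul_setLIntegral_inter_hyperplaneSection_le (F := F ∩ referenceBox n k)
      (hF.inter (measurableSet_closedBall.prod measurableSet_closedBall))
      (measurableSet_le (measurable_const (a := (δ : ℝ))) measurable_norm) fun _ hu => hu
    exact (mul_le_mul_right (lintegral_mono_set hT1) _).trans hle
  have hfinite : L * volume T ≠ ⊤ :=
    mul_ne_top coe_ne_top ((measure_mono hT1).trans_lt measure_closedBall_lt_top).ne
  have hhalf : L * volume T ≤ 2 * main :=
    le_two_mul_of_le_add_of_four_mul_le hfinite hsplit hnear hfar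
  calc δ * (L * volume T) ≤ δ * (2 * main) := by gcongr
    _ = 2 * (δ * main) := mul_left_comm _ _ _
    _ ≤ 2 * (2 ^ n * volume (F ∩ referenceBox n k)) := by gcongr
    _ = _ := by rw [pow_succ']; ring

end ReferenceBox

section AffineNormalization

variable {n : ℕ}

/-- The constant by which the density `L ^ (n + 2) * f / e ^ (n + 1)` of an incidence
configuration is divided to give its quality `Y`. -/
def incidenceConst (n : ℕ) : ℝ≥0 :=
  2 ^ n * (16 * (n + 2)) * 4 ^ (n + 1)

lemma incidenceConst_pos : 0 < incidenceConst n := by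
  unfold incidenceConst
  positivity

lemma simplex_bounds_of_incidenceConst_mul_le {e f L m D τ Y : ℝ≥0} (he0 : e ≠ 0) (hf0 : f ≠ 0)
    (hL0 : L ≠ 0) (hY : incidenceConst n * Y * e ^ (n + 1) ≤ L ^ (n + 2) * f)
    (hm : L * f / (4 * e) < m) (hτ : τ ≤ 2 ^ n)
    (hD : m + L / (4 * f ^ n) * m ^ (n + 1) * D < 4 * (n + 2) * (D * τ)) :
    2 ^ n * Y ≤ τ ∧ 4 ^ (n + 1) * Y * (e / L) ^ n ≤ D * L := by
  have hD0 : 0 < D := pos_iff_ne_zero.2 <| by rintro rfl; simp at hD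
  have he : 0 < e := pos_iff_ne_zero.2 he0
  have hf : 0 < f := pos_iff_ne_zero.2 hf0
  have hL : 0 < L := pos_iff_ne_zero.2 hL0
  rw [incidenceConst] at hY
  constructor
  · have hκ : 4 * (n + 2) * (2 ^ n * Y) ≤ L / (4 * f ^ n) * m ^ (n + 1) :=
      calc 4 * (n + 2) * (2 ^ n * Y) = 2 ^ n * (16 * (n + 2)) * 4 ^ (n + 1) * Y * e ^ (n + 1) /
            (4 ^ (n + 2) * e ^ (n + 1)) := by field_simp; ring
        _ ≤ L ^ (n + 2) * f / (4 ^ (n + 2) * e ^ (n + 1)) := by gcongr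
        _ = L / (4 * f ^ n) * (L * f / (4 * e)) ^ (n + 1) := by
            rw [div_pow, mul_pow, mul_pow]; field_simp; ring
        _ ≤ _ := by gcongr
    have hmul : 4 * (n + 2) * D * (2 ^ n * Y) ≤ 4 * (n + 2) * D * τ :=
      calc 4 * (n + 2) * D * (2 ^ n * Y) = 4 * (n + 2) * (2 ^ n * Y) * D := by ring
        _ ≤ m + L / (4 * f ^ n) * m ^ (n + 1) * D := le_add_left (by gcongr)
        _ ≤ 4 * (n + 2) * (D * τ) := hD.le
        _ = _ := by ring
    exact le_of_mul_le_mul_left hmul (by positivity)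
  · have hlow : L * f / (4 * e) ≤ 4 * (n + 2) * (D * 2 ^ n) :=
      calc L * f / (4 * e) ≤ m := hm.le
        _ ≤ _ := le_self_add
        _ ≤ 4 * (n + 2) * (D * τ) := hD.le
        _ ≤ _ := by gcongr
    have hmul : 4 * (n + 2) * 2 ^ n * (4 ^ (n + 1) * Y * (e / L) ^ n) ≤
        4 * (n + 2) * 2 ^ n * (D * L) :=
      calc 4 * (n + 2) * 2 ^ n * (4 ^ (n + 1) * Y * (e / L) ^ n) =
            2 ^ n * (16 * (n + 2)) * 4 ^ (n + 1) * Y * e ^ (n + 1) / (4 * e * L ^ n) := by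
            rw [div_pow]; field_simp; ring
        _ ≤ L ^ (n + 2) * f / (4 * e * L ^ n) := by gcongr
        _ = L * f / (4 * e) * L := by field_simp; ring
        _ ≤ 4 * (n + 2) * (D * 2 ^ n) * L := by gcongr
        _ = _ := by ring
    exact le_of_mul_le_mul_left hmul (by positivity)

lemma volume_closedBall_zero_coe (r : ℝ≥0) :
    volume (Metric.closedBall (0 : Fin n → ℝ) r) = ((2 * r) ^ n : ℝ≥0) := by
  rw [Real.volume_pi_closedBall _ r.coe_nonneg, Fintype.card_fin, ← ofReal_coe_nnreal]
  simp

theorem exists_preimage_pencilSection {E G : Set ((Fin n → ℝ) × ℝ)} (hE : MeasurableSet E)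
    (hG : MeasurableSet G) {e f L Y : ℝ≥0} (he : volume E = e) (he0 : e ≠ 0) (hf : volume G = f)
    (hf0 : f ≠ 0) (hL0 : L ≠ 0) (hL : ∀ p ∈ G, L ≤ volume (hyperplaneSection E p))
    (hY : incidenceConst n * Y * e ^ (n + 1) ≤ L ^ (n + 2) * f) :
    ∃ y c, ∃ P : Matrix (Fin n) (Fin n) ℝ, P.det ≠ 0 ∧ ∃ T ⊆ Metric.closedBall 0 1,
      MeasurableSet T ∧ (∀ t ∈ T, c + P *ᵥ t ∈ pencilSection G y) ∧ 2 ^ n * Y ≤ volume T ∧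
      4 ^ (n + 1) * Y * (e / L) ^ n ≤ ‖P.det‖₊ * L := by
  obtain ⟨y, A, hAG, hA, m, hm, hlow, hκ⟩ := exists_subset_pencilSection hE hG he he0 hf hf0 hL0 hL
  obtain ⟨a, ha, hcell⟩ := exists_simplex_lt_volume_inter_simplexCell hA hm (pos_of_gt hlow).ne' hκ
  have hdet : simplexVol a = ‖(edgeMatrix a).det‖₊ := simplexVol_eq_nnnorm_det_edgeMatrix a
  have hP : (edgeMatrix a).det ≠ 0 := by simpa [hdet] using ha
  have hinj : Function.Injective (edgeMatrix a).mulVec :=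
    Matrix.mulVec_injective_of_isUnit ((Matrix.isUnit_iff_isUnit_det _).2 hP.isUnit)
  set T := (fun t => a 0 + edgeMatrix a *ᵥ t) ⁻¹' (A ∩ simplexCell a)
  have hT1 : T ⊆ Metric.closedBall 0 1 := fun t ht => by
    obtain ⟨t', ht', h⟩ := exists_eq_add_edgeMatrix_mulVec ha ht.2
    rwa [hinj (add_left_cancel h)]
  have hTvol : volume T ≤ (2 ^ n : ℝ≥0) := by
    simpa using (measure_mono hT1).trans_eq (volume_closedBall_zero_coe (n := n) 1)
  obtain ⟨τ, hτ⟩ : ∃ τ : ℝ≥0, volume T = τ :=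
    ⟨_, (coe_toNNReal (hTvol.trans_lt coe_lt_top).ne).symm⟩
  have hvol : ‖(edgeMatrix a).det‖ₑ * volume T = volume (A ∩ simplexCell a) :=
    enorm_det_mul_volume_preimage_add_mulVec hP _ _
  rw [← hvol, hτ, hdet] at hcell
  rw [hτ] at hTvol
  obtain ⟨h1, h2⟩ := simplex_bounds_of_incidenceConst_mul_le (D := ‖(edgeMatrix a).det‖₊)
    he0 hf0 hL0 hY hlow (by exact_mod_cast hTvol)
    (by rw [enorm_eq_nnnorm] at hcell; exact_mod_cast hcell)
  refine ⟨y, a 0, edgeMatrix a, hP, T, hT1, ?_, fun t ht => hAG ht.1, ?_, h2⟩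
  · exact (hA.inter (measurable_prodMk_left measurableSet_mem_simplexCell)).preimage (by fun_prop)
  · rw [hτ]
    exact_mod_cast h1

/-- The affine map of `ℝⁿ × ℝ` which takes the hyperplane `s = t · u` to the hyperplane through `y`
of slope `c + P *ᵥ t`, where `M` is the transposed inverse of `P`. -/
def affineChart (y : (Fin n → ℝ) × ℝ) (c : Fin n → ℝ) (M : Matrix (Fin n) (Fin n) ℝ)
    (q : (Fin n → ℝ) × ℝ) : (Fin n → ℝ) × ℝ :=
  (y.1 + M *ᵥ q.1, q.2 + (y.2 + c ⬝ᵥ (M *ᵥ q.1)))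

lemma continuous_affineChart (y : (Fin n → ℝ) × ℝ) (c : Fin n → ℝ)
    (M : Matrix (Fin n) (Fin n) ℝ) : Continuous (affineChart y c M) := by
  unfold affineChart
  fun_prop

lemma enorm_det_mul_volume_preimage_affineChart (y : (Fin n → ℝ) × ℝ) (c : Fin n → ℝ)
    {M : Matrix (Fin n) (Fin n) ℝ} (hM : M.det ≠ 0) {E : Set ((Fin n → ℝ) × ℝ)}
    (hE : MeasurableSet E) : ‖M.det‖ₑ * volume (affineChart y c M ⁻¹' E) = volume E := by
  have hf : MeasurePreserving (fun u => y.1 + M *ᵥ u) (‖M.det‖ₑ • volume) volume :=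
    ⟨by fun_prop, Measure.ext fun s hs => by
      rw [Measure.map_apply (by fun_prop) hs]
      exact enorm_det_mul_volume_preimage_add_mulVec hM y.1 s⟩
  have hchart := measurePreserving_shear hf (φ := fun u => y.2 + c ⬝ᵥ (M *ᵥ u)) (by fun_prop)
  rw [Measure.prod_smul_left] at hchart
  exact hchart.measure_preimage hE.nullMeasurableSet

lemma hyperplaneSection_preimage_affineChart (E : Set ((Fin n → ℝ) × ℝ)) (y : (Fin n → ℝ) × ℝ)
    (c : Fin n → ℝ) {P : Matrix (Fin n) (Fin n) ℝ} (hP : P.det ≠ 0) (t : Fin n → ℝ) :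
    hyperplaneSection (affineChart y c P⁻¹ᵀ ⁻¹' E) (t, 0) = (fun v => y.1 + P⁻¹ᵀ *ᵥ v) ⁻¹'
      hyperplaneSection E (c + P *ᵥ t, y.2 - (c + P *ᵥ t) ⬝ᵥ y.1) := by
  ext v
  have hPM : (P *ᵥ t) ⬝ᵥ (P⁻¹ᵀ *ᵥ v) = t ⬝ᵥ v := by
    rw [Matrix.dotProduct_mulVec, Matrix.vecMul_transpose, Matrix.mulVec_mulVec,
      Matrix.nonsing_inv_mul _ hP.isUnit, Matrix.one_mulVec]
  simp only [hyperplaneSection, affineChart, Set.mem_preimage, Set.mem_ofPred_eq, dotProduct_add,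
    add_dotProduct, hPM]
  ring_nf

lemma nnnorm_det_mul_nnnorm_det_inv_transpose {ι : Type*} [Fintype ι] [DecidableEq ι]
    {P : Matrix ι ι ℝ} (hP : P.det ≠ 0) : ‖P.det‖₊ * ‖P⁻¹ᵀ.det‖₊ = 1 := by
  rw [← nnnorm_mul, Matrix.det_transpose, Matrix.det_nonsing_inv, Ring.inverse_eq_inv',
    mul_inv_cancel₀ hP, nnnorm_one]

theorem mul_le_volume_preimage_affineChart_inter_referenceBox {E : Set ((Fin n → ℝ) × ℝ)}
    (hE : MeasurableSet E) (y : (Fin n → ℝ) × ℝ) (c : Fin n → ℝ) {P : Matrix (Fin n) (Fin n) ℝ}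
    (hP : P.det ≠ 0) {T : Set (Fin n → ℝ)} (hT : MeasurableSet T)
    (hT1 : T ⊆ Metric.closedBall 0 1) {L k δ : ℝ≥0} (hL : ∀ t ∈ T,
      L ≤ volume (hyperplaneSection E (c + P *ᵥ t, y.2 - (c + P *ᵥ t) ⬝ᵥ y.1)))
    (hk0 : k ≠ 0) (hk : 4 * (2 ^ n * volume E) ≤ k * (L * volume T))
    (hδ : 4 * volume (Metric.closedBall (0 : Fin n → ℝ) δ) ≤ ‖P.det‖ₑ * L) :
    δ * (L * volume T) ≤ 2 ^ (n + 1) *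
      (‖P⁻¹ᵀ.det‖ₑ * volume (affineChart y c P⁻¹ᵀ ⁻¹' E ∩ referenceBox n k)) := by
  have hM : P⁻¹ᵀ.det ≠ 0 := by simpa [Matrix.det_nonsing_inv] using hP
  have hPM (z : ℝ≥0∞) : ‖P.det‖ₑ * (‖P⁻¹ᵀ.det‖ₑ * z) = z := by
    rw [← mul_assoc, enorm_eq_nnnorm, enorm_eq_nnnorm, ← coe_mul,
      nnnorm_det_mul_nnnorm_det_inv_transpose hP, coe_one, one_mul]
  set F := affineChart y c P⁻¹ᵀ ⁻¹' E
  have hF : ‖P.det‖ₑ * volume E = volume F := by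
    rw [← enorm_det_mul_volume_preimage_affineChart y c hM hE, hPM]
  have hLF (t) (ht : t ∈ T) : (‖P.det‖₊ * L : ℝ≥0) ≤ volume (hyperplaneSection F (t, 0)) := by
    rw [hyperplaneSection_preimage_affineChart E y c hP, ← hPM (volume _), coe_mul,
      enorm_det_mul_volume_preimage_add_mulVec hM]
    gcongr
    · rfl
    · exact hL t ht
  have hFk : 4 * (2 ^ n * volume F) ≤ k * ((‖P.det‖₊ * L : ℝ≥0) * volume T) := by
    rw [← hF, coe_mul, ← enorm_eq_nnnorm]
    calc 4 * (2 ^ n * (‖P.det‖ₑ * volume E)) = ‖P.det‖ₑ * (4 * (2 ^ n * volume E)) := by ring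
      _ ≤ ‖P.det‖ₑ * (k * (L * volume T)) := by gcongr
      _ = _ := by ring
  have hbox := mul_le_volume_inter_referenceBox hT hT1
    ((continuous_affineChart y c _).measurable hE) hLF hk0 hFk hδ
  calc δ * (L * volume T)
      = ‖P⁻¹ᵀ.det‖ₑ * (δ * ((‖P.det‖₊ * L : ℝ≥0) * volume T)) := by
        rw [← hPM (δ * (L * volume T)), coe_mul, ← enorm_eq_nnnorm]
        ring
    _ ≤ ‖P⁻¹ᵀ.det‖ₑ * (2 ^ (n + 1) * volume (F ∩ referenceBox n k)) := by gcongr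
    _ = _ := mul_left_comm _ _ _

theorem exists_affineChart_referenceBox (hn : n ≠ 0) {E G : Set ((Fin n → ℝ) × ℝ)}
    (hE : MeasurableSet E) (hG : MeasurableSet G) {e f L Y : ℝ≥0} (he : volume E = e)
    (he0 : e ≠ 0) (hf : volume G = f) (hf0 : f ≠ 0) (hL0 : L ≠ 0)
    (hL : ∀ p ∈ G, L ≤ volume (hyperplaneSection E p)) (hY0 : Y ≠ 0)
    (hY : incidenceConst n * Y * e ^ (n + 1) ≤ L ^ (n + 2) * f) :
    Y ≤ 1 ∧ ∃ y c, ∃ M : Matrix (Fin n) (Fin n) ℝ, M.det ≠ 0 ∧ ∃ k : ℝ≥0, k ≠ 0 ∧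
      k ^ (n + 1) * Y ^ (n + 2) * ‖M.det‖₊ ≤ e ∧
      Y ^ 2 * e ≤ ‖M.det‖ₑ * volume (affineChart y c M ⁻¹' E ∩ referenceBox n k) := by
  obtain ⟨y, c, P, hP, T, hT1, hT, hTG, hTvol, hPL⟩ :=
    exists_preimage_pencilSection hE hG he he0 hf hf0 hL0 hL hY
  have hY1 : Y ≤ 1 := by
    have hball := hTvol.trans ((measure_mono hT1).trans_eq (volume_closedBall_zero_coe (n := n) 1))
    norm_cast at hball
    exact le_of_mul_le_mul_left (by simpa using hball) (pow_pos two_pos n)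
  obtain ⟨x, rfl⟩ : ∃ x, e = L * x := ⟨e / L, by field_simp⟩
  have hx0 : x ≠ 0 := right_ne_zero_of_mul he0
  rw [mul_div_cancel_left₀ _ hL0] at hPL
  have hk : 4 * (2 ^ n * volume E) ≤ (4 * x / Y : ℝ≥0) * (L * volume T) :=
    calc 4 * (2 ^ n * volume E) = (4 * x / Y : ℝ≥0) * (L * (2 ^ n * Y)) := by
          rw [he]; norm_cast; field_simp
      _ ≤ _ := by gcongr
  have hδ : 4 * volume (Metric.closedBall (0 : Fin n → ℝ) (2 * Y * x : ℝ≥0)) ≤ ‖P.det‖ₑ * L := by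
    rw [volume_closedBall_zero_coe, enorm_eq_nnnorm]
    norm_cast
    calc 4 * (2 * (2 * Y * x)) ^ n = 4 ^ (n + 1) * Y ^ n * x ^ n := by
          rw [← mul_assoc, ← mul_assoc, mul_pow, mul_pow]; ring
      _ ≤ 4 ^ (n + 1) * Y * x ^ n := by gcongr; exact pow_le_of_le_one zero_le hY1 hn
      _ ≤ _ := hPL
  refine ⟨hY1, y, c, P⁻¹ᵀ, by simpa [Matrix.det_nonsing_inv] using hP, 4 * x / Y, by positivity,
    ?_, ?_⟩
  · calc (4 * x / Y) ^ (n + 1) * Y ^ (n + 2) * ‖P⁻¹ᵀ.det‖₊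
        = x * (4 ^ (n + 1) * Y * x ^ n) * ‖P⁻¹ᵀ.det‖₊ := by
          rw [div_pow, mul_pow]; field_simp; ring
      _ ≤ x * (‖P.det‖₊ * L) * ‖P⁻¹ᵀ.det‖₊ := by gcongr
      _ = (‖P.det‖₊ * ‖P⁻¹ᵀ.det‖₊) * (L * x) := by ring
      _ = L * x := by rw [nnnorm_det_mul_nnnorm_det_inv_transpose hP, one_mul]
  · have hbox := mul_le_volume_preimage_affineChart_inter_referenceBox hE y c hP hT hT1
      (fun t ht => hL _ (hTG t ht)) (by positivity) hk hδ
    refine (ENNReal.mul_le_mul_iff_right (a := 2 ^ (n + 1)) (by simp) (by finiteness)).1 ?_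
    calc 2 ^ (n + 1) * (Y ^ 2 * (L * x : ℝ≥0) : ℝ≥0∞)
        = (2 * Y * x : ℝ≥0) * (L * (2 ^ n * Y)) := by push_cast; ring
      _ ≤ (2 * Y * x : ℝ≥0) * (L * volume T) := by gcongr
      _ ≤ _ := hbox

end AffineNormalization

section ParaboloidSlab

variable {n : ℕ}

/-- The part over an orthobox of a neighbourhood of the paraboloid with apex `x`. The sets
`π*(ℬ)` are of this form. -/
def paraboloidSlab (x : Pt n) (y₀ : Vec n) (b : Fin n → Vec n) (r : Fin n → ℝ) (ρ : ℝ) :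
    Set (Pt n) :=
  {y | (∀ j, |⟪y.1 - y₀, b j⟫| < r j) ∧ |y.2 - (x.2 - ‖y.1 - x.1‖ ^ 2)| < ρ}

lemma snd_image_ballI (x : Pt n) (y₀ : Vec n) (b : Fin n → Vec n) {r : Fin n → ℝ}
    (hr : ∀ j, 0 < r j) (rs : Fin n → ℝ) (ρ : ℝ) :
    Prod.snd '' ballI n (x, (y₀, x.2 - ‖y₀ - x.1‖ ^ 2)) b r rs ρ =
      paraboloidSlab x y₀ b rs ρ := by
  ext y
  constructor
  · rintro ⟨z, ⟨-, -, -, hbox, hheight⟩, rfl⟩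
    exact ⟨hbox, by convert hheight using 2; ring⟩
  · rintro ⟨hbox, hheight⟩
    refine ⟨((x.1, y.2 + ‖y.1 - x.1‖ ^ 2), y), ⟨by simp, by simpa using hr, ?_, hbox, ?_⟩, rfl⟩
    · convert hheight using 2
      simp only [norm_sub_rev x.1 y₀]
      ring
    · convert hheight using 2
      ring

lemma setOf_abs_inner_sub_lt_eq_preimage (b : OrthonormalBasis (Fin n) ℝ (Vec n)) (y₀ : Vec n)
    (r : Fin n → ℝ) : {x : Vec n | ∀ j, |⟪x - y₀, b j⟫| < r j} = (WithLp.ofLp ∘ b.repr) ⁻¹'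
      Set.univ.pi fun j => Set.Ioo (⟪b j, y₀⟫ - r j) (⟪b j, y₀⟫ + r j) := by
  ext x
  simp only [Set.mem_ofPred_eq, Set.mem_preimage, Function.comp_apply, Set.mem_univ_pi,
    OrthonormalBasis.repr_apply_apply, real_inner_comm _ (b _), inner_sub_left, Set.mem_Ioo,
    abs_lt, neg_lt_sub_iff_lt_add, sub_lt_iff_lt_add]
  refine forall_congr' fun j => ?_
  constructor <;> rintro ⟨h, h'⟩ <;> constructor <;> linarith

lemma volume_paraboloidSlab (x : Pt n) (y₀ : Vec n) (b : OrthonormalBasis (Fin n) ℝ (Vec n))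
    (r : Fin n → ℝ) (ρ : ℝ) : volume (paraboloidSlab x y₀ b r ρ) =
      (∏ j, ENNReal.ofReal (2 * r j)) * ENNReal.ofReal (2 * ρ) := by
  set Q := {x : Vec n | ∀ j, |⟪x - y₀, b j⟫| < r j}
  have hQ : Q = (WithLp.ofLp ∘ b.repr) ⁻¹'
      Set.univ.pi fun j => Set.Ioo (⟪b j, y₀⟫ - r j) (⟪b j, y₀⟫ + r j) :=
    setOf_abs_inner_sub_lt_eq_preimage b y₀ r
  have hbox : MeasurableSet (Set.univ.pi fun j => Set.Ioo (⟪b j, y₀⟫ - r j) (⟪b j, y₀⟫ + r j)) :=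
    MeasurableSet.univ_pi fun j => measurableSet_Ioo
  have hrepr := (PiLp.volume_preserving_ofLp (Fin n)).comp b.measurePreserving_repr
  have hvol : volume Q = ∏ j, ENNReal.ofReal (2 * r j) := by
    rw [hQ, hrepr.measure_preimage hbox.nullMeasurableSet, Real.volume_pi_Ioo]
    ring_nf
  have hshear := measurePreserving_shear (MeasurePreserving.id (volume : Measure (Vec n)))
    (φ := fun u => -(x.2 - ‖u - x.1‖ ^ 2)) (by fun_prop)
  have hslab : paraboloidSlab x y₀ b r ρ =
      (fun p : Vec n × ℝ => (id p.1, p.2 + -(x.2 - ‖p.1 - x.1‖ ^ 2))) ⁻¹'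
        (Q ×ˢ Set.Ioo (-ρ) ρ) := by
    ext p
    rw [Set.mem_preimage, Set.mem_prod, Set.mem_Ioo, ← abs_lt, ← sub_eq_add_neg]
    rfl
  rw [hslab, Measure.volume_eq_prod, hshear.measure_preimage
    ((hQ ▸ hrepr.measurable hbox).prod measurableSet_Ioo).nullMeasurableSet,
    Measure.prod_prod, hvol, Real.volume_Ioo]
  ring_nf

lemma measurableSet_paraboloidSlab (x : Pt n) (y₀ : Vec n) (b : Fin n → Vec n) (r : Fin n → ℝ)
    (ρ : ℝ) : MeasurableSet (paraboloidSlab x y₀ b r ρ) := by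
  simp only [paraboloidSlab, Set.ofPred_and, Set.ofPred_forall]
  exact (MeasurableSet.iInter fun j => measurableSet_lt (by fun_prop) (by fun_prop)).inter
    (measurableSet_lt (by fun_prop) (by fun_prop))

lemma volume_paraboloidSlab_mul (x : Pt n) (y₀ : Vec n) (b : OrthonormalBasis (Fin n) ℝ (Vec n))
    {τ : Fin n → ℝ} (hτ : ∀ j, 0 ≤ τ j) {ρ : ℝ} (hρ : 0 ≤ ρ) :
    volume (paraboloidSlab x y₀ b (fun j => ρ * τ j) ρ) =
      ENNReal.ofReal ((2 * ρ) ^ (n + 1) * ∏ j, τ j) := by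
  rw [volume_paraboloidSlab, ← ENNReal.ofReal_prod_of_nonneg fun j _ => by
    have := hτ j; positivity, ← ENNReal.ofReal_mul (Finset.prod_nonneg fun j _ => by
    have := hτ j; positivity)]
  simp only [← mul_assoc, Finset.prod_mul_distrib, Finset.prod_const, Finset.card_univ,
    Fintype.card_fin]
  ring_nf

lemma exists_abs_sub_mul_lt {q : ℕ} {ρ τ : ℝ} (hρ : 0 < ρ) (hτ : |τ| < q * ρ) :
    ∃ i < 2 * q, |τ - (i - q) * ρ| < ρ := by
  obtain ⟨hlo, hhi⟩ := abs_lt.1 hτ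
  have hlo' : -q < τ / ρ := by rwa [lt_div_iff₀ hρ, neg_mul]
  have hhi' : τ / ρ < q := (div_lt_iff₀ hρ).2 hhi
  have hle := Nat.floor_le (a := τ / ρ + q) (by linarith)
  have hlt := Nat.lt_floor_add_one (τ / ρ + q)
  refine ⟨⌊τ / ρ + q⌋₊, ?_, ?_⟩
  · exact_mod_cast hle.trans_lt (by linarith : τ / ρ + q < 2 * q)
  · rw [← div_lt_one hρ, ← abs_of_pos hρ, ← abs_div, abs_of_pos hρ, sub_div,
      mul_div_cancel_right₀ _ hρ.ne', abs_lt]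
    constructor <;> linarith

lemma exists_volume_inter_paraboloidSlab_le (E : Set (Pt n)) (x : Pt n) (y₀ : Vec n)
    (b : Fin n → Vec n) (r : Fin n → ℝ) {q : ℕ} (hq : q ≠ 0) {ρ : ℝ} (hρ : 0 < ρ) :
    ∃ x' : Pt n, volume (E ∩ paraboloidSlab x y₀ b r (q * ρ)) ≤
      2 * q * volume (E ∩ paraboloidSlab x' y₀ b r ρ) := by
  set P := fun i : ℕ => E ∩ paraboloidSlab (x.1, x.2 + (i - q) * ρ) y₀ b r ρ
  have hcover : E ∩ paraboloidSlab x y₀ b r (q * ρ) ⊆ ⋃ i ∈ Finset.range (2 * q), P i := by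
    rintro y ⟨hyE, hbox, hheight⟩
    obtain ⟨i, hi, hyi⟩ := exists_abs_sub_mul_lt hρ hheight
    refine Set.mem_iUnion₂.2 ⟨i, Finset.mem_range.2 hi, hyE, hbox, ?_⟩
    convert hyi using 2
    ring
  obtain ⟨i, -, hmax⟩ := (Finset.range (2 * q)).exists_max_image (fun i => volume (P i))
    ⟨0, by simp; omega⟩
  refine ⟨(x.1, x.2 + (i - q) * ρ), ?_⟩
  calc volume (E ∩ paraboloidSlab x y₀ b r (q * ρ))
      ≤ ∑ i ∈ Finset.range (2 * q), volume (P i) :=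
        (measure_mono hcover).trans (measure_biUnion_finset_le _ _)
    _ ≤ (Finset.range (2 * q)).card • volume (P i) := Finset.sum_le_card_nsmul _ _ _ hmax
    _ = 2 * q * volume (P i) := by simp

theorem exists_ballI_of_volume_paraboloidSlab_le (E : Set (Pt n)) (x : Pt n) (y₀ : Vec n)
    (b : OrthonormalBasis (Fin n) ℝ (Vec n)) {r : Fin n → ℝ} (hr : ∀ j, 0 < r j) {ρ : ℝ}
    (hρ : 0 < ρ) {q : ℕ} (hq : q ≠ 0) (hE : volume (paraboloidSlab x y₀ b r ρ) ≤ q * volume E) :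
    ∃ zb e r' rs ρ', IsBallParams n zb e r' rs ρ' ∧
      volume (Prod.snd '' ballI n zb e r' rs ρ') ≤ volume E ∧
      volume (E ∩ paraboloidSlab x y₀ b r ρ) ≤
        2 * q * volume (Prod.snd '' ballI n zb e r' rs ρ' ∩ E) := by
  have hq' : (0 : ℝ) < q := by positivity
  have hρ' : ρ = q * (ρ / q) := by field_simp
  obtain ⟨x', hx'⟩ := exists_volume_inter_paraboloidSlab_le E x y₀ b r hq (div_pos hρ hq')
  have hball := snd_image_ballI x' y₀ b (fun j => div_pos (div_pos hρ hq') (hr j)) r (ρ / q)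
  refine ⟨(x', (y₀, x'.2 - ‖y₀ - x'.1‖ ^ 2)), b, fun j => ρ / q / r j, r, ρ / q,
    ⟨rfl, div_pos hρ hq', b.orthonormal, fun j => div_pos (div_pos hρ hq') (hr j), hr,
      fun j => div_mul_cancel₀ _ (hr j).ne'⟩, ?_, ?_⟩
  · rw [hball, ← ENNReal.mul_le_mul_iff_right (a := q) (by simpa) (by simp)]
    refine hE.trans' (le_of_eq ?_)
    rw [volume_paraboloidSlab, volume_paraboloidSlab, mul_left_comm, ← ENNReal.ofReal_natCast,
      ← ENNReal.ofReal_mul hq'.le]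
    field_simp
  · rw [← hρ'] at hx'
    rwa [hball, Set.inter_comm _ E]

theorem exists_orthonormalBasis_prod_norm_transpose_mulVec {ι : Type*} [Fintype ι] [DecidableEq ι]
    (M : Matrix ι ι ℝ) : ∃ b : OrthonormalBasis ι ℝ (EuclideanSpace ℝ ι),
      ∏ j, ‖WithLp.toLp 2 (Mᵀ *ᵥ (b j).ofLp)‖ = |M.det| := by
  have hM : (M * Mᵀ).IsHermitian := by
    simpa using Matrix.isHermitian_mul_conjTranspose_self M
  refine ⟨hM.eigenvectorBasis, ?_⟩
  have hsq (j : ι) : ‖WithLp.toLp 2 (Mᵀ *ᵥ (hM.eigenvectorBasis j).ofLp)‖ ^ 2 =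
      hM.eigenvalues j := by
    calc ‖WithLp.toLp 2 (Mᵀ *ᵥ (hM.eigenvectorBasis j).ofLp)‖ ^ 2
        = (Mᵀ *ᵥ (hM.eigenvectorBasis j).ofLp) ⬝ᵥ (Mᵀ *ᵥ (hM.eigenvectorBasis j).ofLp) := by
          rw [EuclideanSpace.real_norm_sq_eq]
          simp only [dotProduct, sq]
      _ = (hM.eigenvectorBasis j).ofLp ⬝ᵥ ((M * Mᵀ) *ᵥ (hM.eigenvectorBasis j).ofLp) := by
          rw [← Matrix.mulVec_mulVec, Matrix.dotProduct_mulVec _ M, ← Matrix.mulVec_transpose]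
      _ = hM.eigenvalues j * ‖hM.eigenvectorBasis j‖ ^ 2 := by
          rw [hM.mulVec_eigenvectorBasis, dotProduct_smul, EuclideanSpace.real_norm_sq_eq]
          simp only [dotProduct, sq, smul_eq_mul]
      _ = hM.eigenvalues j := by simp
  rw [← abs_of_nonneg (Finset.prod_nonneg fun j _ => norm_nonneg _), ← sq_eq_sq_iff_abs_eq_abs,
    ← Finset.prod_pow]
  simp_rw [hsq]
  simpa [sq] using hM.det_eq_prod_eigenvalues.symm

end ParaboloidSlab

section Straightening

variable {n : ℕ}

/-- The shear of `ℝ^d` taking hyperplanes to translates of the paraboloid `y_d = -|y'|²`; its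
source carries the sup norm. -/
def unstraighten (p : (Fin n → ℝ) × ℝ) : Pt n :=
  (WithLp.toLp 2 p.1, p.2 - ‖WithLp.toLp 2 p.1‖ ^ 2)

/-- Slope and intercept of the hyperplane taken by `unstraighten` to the paraboloid with
apex `x`. -/
def toHyperplane (x : Pt n) : (Fin n → ℝ) × ℝ :=
  ((2 : ℝ) • x.1.ofLp, x.2 - ‖x.1‖ ^ 2)

lemma unstraighten_toHyperplane (x : Pt n) (u : Fin n → ℝ) :
    unstraighten (u, (toHyperplane x).2 + (toHyperplane x).1 ⬝ᵥ u) =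
      (WithLp.toLp 2 u, x.2 - ‖WithLp.toLp 2 u - x.1‖ ^ 2) := by
  have hinner : ⟪WithLp.toLp 2 u, x.1⟫ = x.1.ofLp ⬝ᵥ u :=
    EuclideanSpace.inner_eq_star_dotProduct _ _
  simp only [unstraighten, toHyperplane, norm_sub_sq_real, hinner, smul_dotProduct, smul_eq_mul]
  ring_nf

lemma toHyperplane_surjective : Function.Surjective (toHyperplane (n := n)) := fun p =>
  ⟨(WithLp.toLp 2 ((2 : ℝ)⁻¹ • p.1), p.2 + ‖WithLp.toLp 2 ((2 : ℝ)⁻¹ • p.1)‖ ^ 2), by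
    simp [toHyperplane]⟩

lemma measurePreserving_unstraighten : MeasurePreserving (unstraighten (n := n)) :=
  measurePreserving_shear (PiLp.volume_preserving_toLp (Fin n))
    (φ := fun u => -‖WithLp.toLp 2 u‖ ^ 2) (by fun_prop)

lemma volume_preimage_toHyperplane_le {G : Set ((Fin n → ℝ) × ℝ)} (hG : MeasurableSet G) :
    volume (toHyperplane ⁻¹' G) ≤ volume G := by
  have hscale : MeasurePreserving (fun u : Vec n => (2 : ℝ) • u.ofLp) volume
      (ENNReal.ofReal |(2 ^ n)⁻¹| • volume) :=
    MeasurePreserving.comp (g := fun u : Fin n → ℝ => (2 : ℝ) • u) ⟨by fun_prop, by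
      simpa using Measure.map_addHaar_smul (volume : Measure (Fin n → ℝ)) (two_ne_zero (α := ℝ))⟩
      (PiLp.volume_preserving_ofLp (Fin n))
  have hshear := measurePreserving_shear hscale (φ := fun u => -‖u‖ ^ 2) (by fun_prop)
  rw [Measure.prod_smul_left] at hshear
  calc volume (toHyperplane ⁻¹' G) = ENNReal.ofReal |(2 ^ n)⁻¹| * volume G :=
        hshear.measure_preimage hG.nullMeasurableSet
    _ ≤ volume G := mul_le_of_le_one_left' <| by
        rw [ENNReal.ofReal_le_one, abs_of_nonneg (by positivity)]
        exact inv_le_one_of_one_le₀ (one_le_pow₀ one_le_two)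

lemma radonT_indicator_eq_volume_hyperplaneSection {E : Set (Pt n)} (hE : MeasurableSet E)
    (x : Pt n) : radonT n (E.indicator 1) x =
      volume (hyperplaneSection (unstraighten ⁻¹' E) (toHyperplane x)) := by
  have hparaboloid : Measurable fun v : Vec n => (v, x.2 - ‖v - x.1‖ ^ 2) := by fun_prop
  calc radonT n (E.indicator 1) x
      = ∫⁻ t : Vec n, (fun v => E.indicator 1 (v, x.2 - ‖v - x.1‖ ^ 2)) (x.1 - t) := by
        simp [radonT]
    _ = ∫⁻ v : Vec n, ((fun v => (v, x.2 - ‖v - x.1‖ ^ 2)) ⁻¹' E).indicator 1 v :=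
        lintegral_sub_left_eq_self (fun v => E.indicator 1 (v, x.2 - ‖v - x.1‖ ^ 2)) x.1
    _ = volume ((fun v : Vec n => (v, x.2 - ‖v - x.1‖ ^ 2)) ⁻¹' E) :=
        lintegral_indicator_one (hparaboloid hE)
    _ = volume (hyperplaneSection (unstraighten ⁻¹' E) (toHyperplane x)) := by
        rw [← (PiLp.volume_preserving_toLp (Fin n)).measure_preimage
          (hparaboloid hE).nullMeasurableSet]
        simp only [hyperplaneSection, Set.mem_preimage, unstraighten_toHyperplane]
        rfl

lemma abs_inner_toLp_mulVec_le {ι : Type*} [Fintype ι] (M : Matrix ι ι ℝ) (v : ι → ℝ)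
    (b : EuclideanSpace ℝ ι) : |⟪WithLp.toLp 2 (M *ᵥ v), b⟫| ≤
      ‖WithLp.toLp 2 v‖ * ‖WithLp.toLp 2 (Mᵀ *ᵥ b.ofLp)‖ := by
  have hadjoint : ⟪WithLp.toLp 2 (M *ᵥ v), b⟫ =
      ⟪WithLp.toLp 2 v, WithLp.toLp 2 (Mᵀ *ᵥ b.ofLp)⟫ := by
    simp only [EuclideanSpace.inner_eq_star_dotProduct, star_trivial]
    rw [Matrix.dotProduct_mulVec, Matrix.mulVec_transpose]
  exact hadjoint ▸ abs_real_inner_le_norm _ _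

lemma norm_toLp_lt {v : Fin n → ℝ} {k : ℝ} (hk : 0 < k) (hv : ‖v‖ ≤ k) :
    ‖WithLp.toLp 2 v‖ < (n + 1) * k := by
  refine lt_of_pow_lt_pow_left₀ 2 (by positivity) ?_
  calc ‖WithLp.toLp 2 v‖ ^ 2 = ∑ i, ‖v i‖ ^ 2 := EuclideanSpace.norm_sq_eq _
    _ ≤ ∑ _i : Fin n, k ^ 2 := by gcongr with i; exact (norm_le_pi_norm v i).trans hv
    _ = n * k ^ 2 := by simp
    _ < ((n + 1) * k) ^ 2 := by rw [mul_pow]; gcongr; nlinarith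

lemma unstraighten_affineChart_mem_paraboloidSlab {x : Pt n} {y : (Fin n → ℝ) × ℝ}
    {c : Fin n → ℝ} (hx : toHyperplane x = (c, y.2 - c ⬝ᵥ y.1)) {M : Matrix (Fin n) (Fin n) ℝ}
    {b : Fin n → Vec n} (hb : ∀ j, 0 < ‖WithLp.toLp 2 (Mᵀ *ᵥ (b j).ofLp)‖) {k : ℝ≥0} (hk : k ≠ 0)
    {q : (Fin n → ℝ) × ℝ} (hq : q ∈ referenceBox n k) :
    unstraighten (affineChart y c M q) ∈ paraboloidSlab x (WithLp.toLp 2 y.1) b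
      (fun j => (n + 1) * k * ‖WithLp.toLp 2 (Mᵀ *ᵥ (b j).ofLp)‖) ((n + 1) * k) := by
  have hk0 : (0 : ℝ) < k := by positivity
  have hq1 : ‖q.1‖ ≤ k := by simpa using hq.1
  have hq2 : |q.2| ≤ n * k := by simpa using hq.2
  refine ⟨fun j => ?_, ?_⟩
  · calc |⟪WithLp.toLp 2 (y.1 + M *ᵥ q.1) - WithLp.toLp 2 y.1, b j⟫|
        = |⟪WithLp.toLp 2 (M *ᵥ q.1), b j⟫| := by rw [WithLp.toLp_add, add_sub_cancel_left]
      _ ≤ ‖WithLp.toLp 2 q.1‖ * ‖WithLp.toLp 2 (Mᵀ *ᵥ (b j).ofLp)‖ :=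
          abs_inner_toLp_mulVec_le M q.1 (b j)
      _ < _ := mul_lt_mul_of_pos_right (norm_toLp_lt hk0 hq1) (hb j)
  · have hheight : (unstraighten (affineChart y c M q)).2 -
        (x.2 - ‖WithLp.toLp 2 (y.1 + M *ᵥ q.1) - x.1‖ ^ 2) = q.2 := by
      have hparaboloid := congr_arg Prod.snd (unstraighten_toHyperplane x (y.1 + M *ᵥ q.1))
      dsimp only at hparaboloid
      rw [← hparaboloid, hx]
      simp only [unstraighten, affineChart, dotProduct_add]
      ring
    exact (congr_arg abs hheight).trans_lt (hq2.trans_lt (by linarith))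

theorem exists_paraboloidSlab_of_affineChart {E : Set (Pt n)} (hE : MeasurableSet E)
    (y : (Fin n → ℝ) × ℝ) (c : Fin n → ℝ) {M : Matrix (Fin n) (Fin n) ℝ} (hM : M.det ≠ 0)
    {k : ℝ≥0} (hk : k ≠ 0) :
    ∃ (x : Pt n) (y₀ : Vec n) (b : OrthonormalBasis (Fin n) ℝ (Vec n)) (r : Fin n → ℝ) (ρ : ℝ),
      (∀ j, 0 < r j) ∧ 0 < ρ ∧
      volume (paraboloidSlab x y₀ b r ρ) = ((2 * (n + 1) * k) ^ (n + 1) * ‖M.det‖₊ : ℝ≥0) ∧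
      ‖M.det‖ₑ * volume (affineChart y c M ⁻¹' (unstraighten ⁻¹' E) ∩ referenceBox n k) ≤
        volume (E ∩ paraboloidSlab x y₀ b r ρ) := by
  obtain ⟨x, hx⟩ := toHyperplane_surjective (c, y.2 - c ⬝ᵥ y.1)
  obtain ⟨b, hb⟩ := exists_orthonormalBasis_prod_norm_transpose_mulVec M
  have hb0 (j) : 0 < ‖WithLp.toLp 2 (Mᵀ *ᵥ (b j).ofLp)‖ :=
    (norm_nonneg _).lt_of_ne'
      (Finset.prod_ne_zero_iff.1 (hb ▸ abs_ne_zero.2 hM) j (Finset.mem_univ j))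
  have hρ : 0 < (n + 1) * (k : ℝ) := by positivity
  refine ⟨x, WithLp.toLp 2 y.1, b, _, (n + 1) * k, fun j => mul_pos hρ (hb0 j), hρ, ?_, ?_⟩
  · rw [volume_paraboloidSlab_mul _ _ _ (fun j => norm_nonneg _) hρ.le, hb,
      ← Real.norm_eq_abs, ← mul_assoc, ← ofReal_coe_nnreal]
    push_cast
    rfl
  · set S := paraboloidSlab x (WithLp.toLp 2 y.1) b _ ((n + 1) * k)
    have hES : MeasurableSet (E ∩ S) := hE.inter (measurableSet_paraboloidSlab _ _ _ _ _)
    calc ‖M.det‖ₑ * volume (affineChart y c M ⁻¹' (unstraighten ⁻¹' E) ∩ referenceBox n k)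
        ≤ ‖M.det‖ₑ * volume (affineChart y c M ⁻¹' (unstraighten ⁻¹' (E ∩ S))) := by
          gcongr
          exact fun q hq =>
            ⟨hq.1, unstraighten_affineChart_mem_paraboloidSlab hx hb0 hk hq.2⟩
      _ = volume (E ∩ S) := by
          rw [enorm_det_mul_volume_preimage_affineChart y c hM
            (measurePreserving_unstraighten.measurable hES),
            measurePreserving_unstraighten.measure_preimage hES.nullMeasurableSet]

lemma exists_nat_mul_between {a x : ℝ≥0} (hx : x ≠ 0) (hxa : x ≤ a) :
    ∃ q : ℕ, q ≠ 0 ∧ a ≤ q * x ∧ q * x ≤ 2 * a := by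
  have hx0 : 0 < x := hx.bot_lt
  have hceil : (⌈a / x⌉₊ : ℝ≥0) ≤ a / x + a / x :=
    (Nat.ceil_lt_add_one zero_le).le.trans (by gcongr; exact (one_le_div₀ hx0).2 hxa)
  refine ⟨⌈a / x⌉₊, (Nat.ceil_pos.2 (div_pos (hx0.trans_le hxa) hx0)).ne', ?_, ?_⟩
  · rw [← div_le_iff₀ hx0]
    exact Nat.le_ceil _
  · calc ⌈a / x⌉₊ * x ≤ (a / x + a / x) * x := by gcongr
      _ = 2 * a := by field_simp; ring

theorem exists_ballI_of_forall_le_hyperplaneSection (hn : n ≠ 0) {E : Set (Pt n)}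
    (hE : MeasurableSet E) {G : Set ((Fin n → ℝ) × ℝ)} (hG : MeasurableSet G) {e f L Y : ℝ≥0}
    (he : volume E = e) (he0 : e ≠ 0) (hf : volume G = f) (hf0 : f ≠ 0) (hL0 : L ≠ 0)
    (hL : ∀ p ∈ G, L ≤ volume (hyperplaneSection (unstraighten ⁻¹' E) p)) (hY0 : Y ≠ 0)
    (hY : incidenceConst n * Y * e ^ (n + 1) ≤ L ^ (n + 2) * f) :
    ∃ zb b r rs ρ, IsBallParams n zb b r rs ρ ∧
      volume (Prod.snd '' ballI n zb b r rs ρ) ≤ volume E ∧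
      Y ^ (n + 4) * volume E ≤
        4 * (2 * (n + 1)) ^ (n + 1) * volume (Prod.snd '' ballI n zb b r rs ρ ∩ E) := by
  obtain ⟨hY1, y, c, M, hM, k, hk0, hk, hvol⟩ := exists_affineChart_referenceBox hn
    (measurePreserving_unstraighten.measurable hE) hG
    ((measurePreserving_unstraighten.measure_preimage hE.nullMeasurableSet).trans he)
    he0 hf hf0 hL0 hL hY0 hY
  obtain ⟨x, y₀, b, r, ρ, hr, hρ, hS, hES⟩ := exists_paraboloidSlab_of_affineChart hE y c hM hk0
  have hn1 : (1 : ℝ≥0) ≤ 2 * (n + 1) := by exact_mod_cast (by omega : 1 ≤ 2 * (n + 1))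
  obtain ⟨q, hq0, hAq, hqA⟩ := exists_nat_mul_between (pow_ne_zero (n + 2) hY0)
    ((pow_le_one₀ zero_le hY1).trans (one_le_pow₀ hn1 (n := n + 1)))
  have hkq : (2 * (n + 1) * k) ^ (n + 1) * ‖M.det‖₊ ≤ q * e :=
    calc (2 * (n + 1) * k) ^ (n + 1) * ‖M.det‖₊
        = (2 * (n + 1)) ^ (n + 1) * (k ^ (n + 1) * ‖M.det‖₊) := by rw [mul_pow, mul_assoc]
      _ ≤ q * Y ^ (n + 2) * (k ^ (n + 1) * ‖M.det‖₊) := by gcongr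
      _ = q * (k ^ (n + 1) * Y ^ (n + 2) * ‖M.det‖₊) := by ring
      _ ≤ q * e := by gcongr
  have hSq : volume (paraboloidSlab x y₀ b r ρ) ≤ q * volume E :=
    hS.trans_le ((coe_le_coe.2 hkq).trans_eq (by rw [he]; push_cast; rfl))
  obtain ⟨zb, b', r', rs, ρ', hball, hle, hinter⟩ :=
    exists_ballI_of_volume_paraboloidSlab_le E x y₀ b hr hρ hq0 hSq
  refine ⟨zb, b', r', rs, ρ', hball, hle, ?_⟩
  set V := volume (Prod.snd '' ballI n zb b' r' rs ρ' ∩ E)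
  calc Y ^ (n + 4) * volume E = Y ^ (n + 2) * (Y ^ 2 * e) := by rw [he]; ring
    _ ≤ Y ^ (n + 2) * (2 * q * V) := mul_le_mul_right (hvol.trans (hES.trans hinter)) _
    _ = 2 * (q * Y ^ (n + 2) : ℝ≥0) * V := by push_cast; ring
    _ ≤ 2 * (2 * (2 * (n + 1)) ^ (n + 1) : ℝ≥0) * V := by gcongr
    _ = _ := by push_cast; ring

end Straightening

section WeakNorm

variable {n : ℕ}

lemma exists_rpow_lt_of_lt_weakN {q : ℝ} (hq : 0 < q) {g : Pt n → ℝ≥0∞} {a : ℝ≥0∞}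
    (ha : a < weakN n q g) :
    ∃ L : ℝ≥0, L ≠ 0 ∧ a ^ q < L ^ q * volume {x | L < g x} := by
  simp only [weakN, lt_iSup_iff] at ha
  obtain ⟨lam, hlam, ha⟩ := ha
  refine ⟨lam.toNNReal, (Real.toNNReal_pos.2 hlam).ne', ?_⟩
  calc a ^ q < (ENNReal.ofReal lam * volume {x | ENNReal.ofReal lam < g x} ^ (1 / q)) ^ q :=
        ENNReal.rpow_lt_rpow ha hq
    _ = _ := by
        rw [ENNReal.mul_rpow_of_nonneg _ _ hq.le, ← ENNReal.rpow_mul, one_div_mul_cancel hq.ne',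
          ENNReal.rpow_one]
        rfl

theorem exists_forall_le_hyperplaneSection_of_lt_weakN {E : Set (Pt n)} (hE : MeasurableSet E)
    {η : ℝ≥0} (h : η * volume E ^ ((n + 1 : ℝ) / (n + 1 + 1)) <
      weakN n (n + 1 + 1) (radonT n (E.indicator 1))) :
    ∃ G : Set ((Fin n → ℝ) × ℝ), MeasurableSet G ∧ ∃ f L : ℝ≥0, volume G = f ∧ f ≠ 0 ∧ L ≠ 0 ∧
      (∀ p ∈ G, L ≤ volume (hyperplaneSection (unstraighten ⁻¹' E) p)) ∧
      η ^ (n + 2) * volume E ^ (n + 1) ≤ L ^ (n + 2) * f := by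
  obtain ⟨L, hL0, hL⟩ := exists_rpow_lt_of_lt_weakN (by positivity) h
  have hpow : (n + 1 + 1 : ℝ) = (n + 2 : ℕ) := by push_cast; ring
  rw [ENNReal.mul_rpow_of_nonneg _ _ (by positivity), ← ENNReal.rpow_mul,
    div_mul_cancel₀ _ (by positivity), hpow, ← Nat.cast_add_one] at hL
  simp only [ENNReal.rpow_natCast, radonT_indicator_eq_volume_hyperplaneSection hE] at hL
  set G₀ := {p | L < volume (hyperplaneSection (unstraighten ⁻¹' E) p)}
  have hG₀ : MeasurableSet G₀ := measurableSet_lt measurable_const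
    (measurable_volume_hyperplaneSection (measurePreserving_unstraighten.measurable hE))
  have hLpow : (L : ℝ≥0∞) ^ (n + 2) ≠ 0 := by simpa
  have hlt : η ^ (n + 2) * volume E ^ (n + 1) / L ^ (n + 2) < volume G₀ := by
    refine ENNReal.div_lt_of_lt_mul' (hL.trans_le ?_)
    gcongr
    exact volume_preimage_toHyperplane_le hG₀
  obtain ⟨G, hG, hGG₀, hGlt, hGtop⟩ := Measure.exists_subset_measure_lt_top hG₀ hlt
  obtain ⟨f, hf⟩ : ∃ f : ℝ≥0, volume G = f := ⟨_, (coe_toNNReal hGtop.ne).symm⟩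
  rw [hf] at hGlt
  refine ⟨G, hG, f, L, hf, fun hf0 => ?_, hL0, fun p hp => (hGG₀ hp).le, ?_⟩
  · simp [hf0] at hGlt
  · exact (ENNReal.div_le_iff' hLpow (by finiteness)).1 hGlt.le

theorem exists_ballI_of_lt_weakN (hn : n ≠ 0) {E : Set (Pt n)} (hE : MeasurableSet E)
    (hE0 : volume E ≠ 0) (hEtop : volume E ≠ ⊤) {η : ℝ≥0} (hη : η ≠ 0)
    (h : η * volume E ^ ((n + 1 : ℝ) / (n + 1 + 1)) <
      weakN n (n + 1 + 1) (radonT n (E.indicator 1))) :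
    ∃ zb b r rs ρ, IsBallParams n zb b r rs ρ ∧
      volume (Prod.snd '' ballI n zb b r rs ρ) ≤ volume E ∧
      (η ^ (n + 2) / incidenceConst n : ℝ≥0) ^ (n + 4) * volume E ≤
        4 * (2 * (n + 1)) ^ (n + 1) * volume (Prod.snd '' ballI n zb b r rs ρ ∩ E) := by
  obtain ⟨G, hG, f, L, hf, hf0, hL0, hL, hηL⟩ := exists_forall_le_hyperplaneSection_of_lt_weakN hE h
  obtain ⟨e, he⟩ : ∃ e : ℝ≥0, volume E = e := ⟨_, (coe_toNNReal hEtop).symm⟩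
  have hconst : 0 < incidenceConst n := incidenceConst_pos
  refine exists_ballI_of_forall_le_hyperplaneSection hn hE hG he (by simpa [he] using hE0)
    hf hf0 hL0 hL (by positivity) ?_
  rw [mul_div_cancel₀ _ hconst.ne']
  rw [he] at hηL
  exact_mod_cast hηL

/-- The constant `c` of the theorem, in dimension `d = n + 1`. -/
def ballConst (n : ℕ) : ℝ≥0 :=
  (2 ^ (n + 2) * incidenceConst n)⁻¹ ^ (n + 4) / (4 * (2 * (n + 1)) ^ (n + 1))

lemma ballConst_pos : 0 < ballConst n := by
  have hconst : 0 < incidenceConst n := incidenceConst_pos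
  unfold ballConst
  positivity

lemma ballConst_mul_pow (ε : ℝ≥0) : 4 * (2 * (n + 1)) ^ (n + 1) *
    (ballConst n * ε ^ ((n + 2) * (n + 4))) =
      ((ε / 2) ^ (n + 2) / incidenceConst n) ^ (n + 4) := by
  rw [pow_mul, ballConst, ← mul_assoc, mul_div_cancel₀ _ (by positivity), ← mul_pow]
  congr 1
  rw [div_pow]
  field_simp

theorem exists_ballI_of_le_weakN (hn : n ≠ 0) {E : Set (Pt n)} (hE : MeasurableSet E)
    (hE0 : volume E ≠ 0) (hEtop : volume E ≠ ⊤) {ε : ℝ≥0} (hε : ε ≠ 0)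
    (h : ε * volume E ^ ((n + 1 : ℝ) / (n + 1 + 1)) ≤
      weakN n (n + 1 + 1) (radonT n (E.indicator 1))) :
    ∃ zb b r rs ρ, IsBallParams n zb b r rs ρ ∧
      volume (Prod.snd '' ballI n zb b r rs ρ) ≤ volume E ∧
      (ballConst n * ε ^ ((n + 2) * (n + 4)) : ℝ≥0) * volume E ≤
        volume (Prod.snd '' ballI n zb b r rs ρ ∩ E) := by
  have hhalf : ((ε / 2 : ℝ≥0) : ℝ≥0∞) < ε := coe_lt_coe.2 (NNReal.half_lt_self hε)
  have hpow : volume E ^ ((n + 1 : ℝ) / (n + 1 + 1)) ≠ 0 :=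
    (ENNReal.rpow_pos (pos_of_ne_zero hE0) hEtop).ne'
  have hlt := (ENNReal.mul_lt_mul_left hpow (by finiteness) hhalf).trans_le h
  obtain ⟨zb, b, r, rs, ρ, hball, hle, hinter⟩ :=
    exists_ballI_of_lt_weakN hn hE hE0 hEtop (by positivity) hlt
  refine ⟨zb, b, r, rs, ρ, hball, hle, ?_⟩
  refine (ENNReal.mul_le_mul_iff_right (a := (4 * (2 * (n + 1)) ^ (n + 1) : ℝ≥0))
    (by simp) coe_ne_top).1 ?_
  rw [← mul_assoc, ← coe_mul, ballConst_mul_pow]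
  exact_mod_cast hinter

end WeakNorm

end StraightenedIncidence

/-- Theorem thm:single (i), first half: if
`‖T χ_E‖_{L^{d+1,∞}} ≥ ε |E|^{d/(d+1)}` then `E` has a large intersection with
`π*(ℬ)` for some ball `ℬ` with `|π*(ℬ)| ≤ |E|`. -/
theorem stmt8 (d : ℕ) (hd : 2 ≤ d) :
    ∃ c C : ℝ, 0 < c ∧ 0 < C ∧
      ∀ (ε : ℝ), 0 < ε →
      ∀ (E : Set (Pt (d - 1))), MeasurableSet E → 0 < volume E → volume E < ⊤ →
        ENNReal.ofReal ε * volume E ^ ((d : ℝ) / (d + 1)) ≤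
          weakN (d - 1) ((d : ℝ) + 1) (radonT (d - 1) (E.indicator 1)) →
        ∃ (zb : Pt (d - 1) × Pt (d - 1)) (e : Fin (d - 1) → Vec (d - 1))
          (r rs : Fin (d - 1) → ℝ) (ρ : ℝ),
          IsBallParams (d - 1) zb e r rs ρ ∧
          volume (Prod.snd '' ballI (d - 1) zb e r rs ρ) ≤ volume E ∧
          ENNReal.ofReal (c * ε ^ C) * volume E ≤
            volume (Prod.snd '' ballI (d - 1) zb e r rs ρ ∩ E) := by
  obtain ⟨n, rfl⟩ : ∃ n, d = n + 1 := ⟨d - 1, by omega⟩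
  refine ⟨ballConst n, ((n + 2) * (n + 4) : ℕ), NNReal.coe_pos.2 ballConst_pos, by positivity,
    fun ε hε E hE hE0 hEtop h => ?_⟩
  lift ε to NNReal using hε.le
  rw [Nat.cast_add_one, ENNReal.ofReal_coe_nnreal] at h
  rw [Real.rpow_natCast, ← NNReal.coe_pow, ← NNReal.coe_mul, ENNReal.ofReal_coe_nnreal]
  exact exists_ballI_of_le_weakN (by omega) hE hE0.ne' hEtop.ne (NNReal.coe_pos.1 hε).ne' h
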